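/- arXiv:1805.11173 — 3 statements merged into one kernel-verified Lean document; each statement's English description precedes it below -/
import Mathlib

section
/- Let B ⊆ A be a non-degenerate C*-inclusion and let Φ be a set of states of B such that every φ ∈ Φ admits a unique extension σ_φ to a state of A. If the family Σ = {σ_φ}_{φ∈Φ} is jointly essentially faithful (i.e. ⋂_{φ∈Φ} K_{σ_φ} = {0}), then the inclusion B ⊆ A is essential: the only closed two-sided ideal L ⊊ A with B ∩ L = {0} is L = {0}. -/
open scoped ComplexOrder

/-- A state on a (subset of a) C*-algebra: a linear functional which is positive
(equivalently, `0 ≤ φ (star a * a)` for all `a`) and has norm one. -/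
def IsState {E : Type*} [SeminormedAddCommGroup E] [NormedSpace ℂ E] [Mul E] [Star E]
    (φ : E →L[ℂ] ℂ) : Prop :=
  (∀ a : E, 0 ≤ φ (star a * a)) ∧ ‖φ‖ = 1

/-- `K_ψ = {a | ψ (x * a * y) = 0 for all x, y}`, the largest (closed) two-sided ideal on which
the positive map `ψ` vanishes. -/
def Kset {E F : Type*} [Mul E] [Zero F] (ψ : E → F) : Set E :=
  {a | ∀ x y : E, ψ (x * a * y) = 0}

/-- Non-degeneracy of the inclusion `Bs ⊆ A`: the closed linear span of `{b * a}` is all of `A`. -/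
def NondegSet {A : Type*} [NonUnitalCStarAlgebra A] (Bs : Set A) : Prop :=
  closure (Submodule.span ℂ {x : A | ∃ b ∈ Bs, ∃ a : A, x = b * a} : Set A) = Set.univ

/-- The inclusion `Bs ⊆ A` is essential: the only closed two-sided ideal `L ⊊ A` with
`Bs ∩ L = {0}` is `L = {0}`. -/
def EssentialIncl {A : Type*} [NonUnitalCStarAlgebra A] (Bs : Set A) : Prop :=
  ∀ L : TwoSidedIdeal A, IsClosed (L : Set A) → (L : Set A) ≠ Set.univ →
    Bs ∩ (L : Set A) = {0} → (L : Set A) = {0}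


theorem norm_le_sa {A : Type*} [NonUnitalCStarAlgebra A]
    (B : NonUnitalStarSubalgebra ℂ A) (hB : IsClosed (B : Set A)) (J : Submodule ℂ A)
    (hJl : ∀ a x, x ∈ J → a * x ∈ J) (hJr : ∀ a x, x ∈ J → x * a ∈ J)
    (hJs : ∀ x ∈ J, star x ∈ J) (hJc : IsClosed (J : Set A))
    (hBJ : ∀ b ∈ B, b ∈ J → b = 0) (b x : A) (hb : b ∈ B) (hx : x - b ∈ J)
    (hbs : IsSelfAdjoint b) (hxs : IsSelfAdjoint x) : ‖b‖ ≤ ‖x‖ := by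
  let D : NonUnitalStarSubalgebra ℂ (A × A) :=
    { carrier := {p | p.1 - p.2 ∈ J}
      add_mem' := by
        intro p q hp hq
        simpa [add_sub_add_comm] using J.add_mem hp hq
      zero_mem' := by simp
      mul_mem' := by
        intro p q hp hq
        have : (p * q).1 - (p * q).2 = p.1 * (q.1 - q.2) + (p.1 - p.2) * q.2 := by
          simp [mul_sub, sub_mul]
        change _ ∈ J
        rw [this]
        exact J.add_mem (hJl _ _ hq) (hJr _ _ hp)
      smul_mem' := by
        intro c p hp
        simpa [smul_sub] using J.smul_mem c hp
      star_mem' := by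
        intro p hp
        simpa using hJs _ hp }
  have hD : IsClosed (D : Set (A × A)) :=
    hJc.preimage (f := fun p : A × A => p.1 - p.2) (by fun_prop)
  let f : ℝ → ℝ := fun t => max (|t| - ‖x‖) 0
  have hf : Continuous f := by fun_prop
  have hf0 : f 0 = 0 := by simp [f]
  have h1 : cfcₙ f ((x, b) : A × A) ∈ D := cfcₙ_mem (𝕜' := ℂ) f (show (x, b) ∈ D from hx)
  have hxb : IsSelfAdjoint ((x, b) : A × A) := by
    ext <;> simp [hxs.star_eq, hbs.star_eq]
  rw [cfcₙ_map_prod (S := ℂ) f x b hf.continuousOn] at h1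
  have h2 : cfcₙ f x = 0 := by
    rw [← cfcₙ_zero ℝ x]
    refine cfcₙ_congr fun t ht => ?_
    have := norm_apply_le_norm_cfcₙ (fun t : ℝ => t) x ht
    rw [cfcₙ_id' ℝ x] at this
    simpa [f] using this
  have h3 : cfcₙ f b = 0 := by
    apply hBJ _ (cfcₙ_mem (𝕜' := ℂ) f hb)
    have : cfcₙ f x - cfcₙ f b ∈ J := h1
    rw [h2, zero_sub] at this
    simpa using J.neg_mem this
  rw [← cfcₙ_id' ℝ b]
  refine norm_cfcₙ_le fun t ht => ?_
  have := norm_apply_le_norm_cfcₙ f b ht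
  rw [h3] at this
  have h4 : f t = 0 := by simpa using this
  simpa [f] using h4

theorem norm_le_gen {A : Type*} [NonUnitalCStarAlgebra A]
    (B : NonUnitalStarSubalgebra ℂ A) (hB : IsClosed (B : Set A)) (J : Submodule ℂ A)
    (hJl : ∀ a x, x ∈ J → a * x ∈ J) (hJr : ∀ a x, x ∈ J → x * a ∈ J)
    (hJs : ∀ x ∈ J, star x ∈ J) (hJc : IsClosed (J : Set A))
    (hBJ : ∀ b ∈ B, b ∈ J → b = 0) (b x : A) (hb : b ∈ B) (hx : x - b ∈ J) : ‖b‖ ≤ ‖x‖ := by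
  have := norm_le_sa B hB J hJl hJr hJs hJc hBJ (star b * b) (star x * x)
    (mul_mem (star_mem hb) hb) (by
      have : star x * x - star b * b = star x * (x - b) + star (x - b) * b := by
        simp [mul_sub, sub_mul]
      rw [this]
      exact J.add_mem (hJl _ _ hx) (hJr _ _ (hJs _ hx)))
    (IsSelfAdjoint.star_mul_self _) (IsSelfAdjoint.star_mul_self _)
  rw [CStarRing.norm_star_mul_self, CStarRing.norm_star_mul_self] at this
  nlinarith [norm_nonneg b, norm_nonneg x]

theorem smul_mem_closed {A : Type*} [NonUnitalCStarAlgebra A] (L : TwoSidedIdeal A)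
    (hL : IsClosed (L : Set A)) (c : ℂ) (x : A) (hx : x ∈ L) : c • x ∈ L := by
  let _ := CStarAlgebra.spectralOrder A
  have _ := CStarAlgebra.spectralOrderedRing A
  have h := CStarAlgebra.increasingApproximateUnit A
  have h1 := (h.tendsto_mul_right x).const_smul c
  have := h.neBot
  refine hL.mem_of_tendsto h1 (Filter.Eventually.of_forall fun e => ?_)
  have := L.mul_mem_left (c • e) x hx
  rwa [smul_mul_assoc] at this

theorem exists_approx {A : Type*} [NonUnitalCStarAlgebra A]
    (B : NonUnitalStarSubalgebra ℂ A) (hB : IsClosed (B : Set A))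
    (hnd : NondegSet (B : Set A)) :
    ∃ l : Filter A, l.NeBot ∧ (∀ᶠ e in l, e ∈ B ∧ star e = e ∧ ‖e‖ ≤ 1) ∧
      ∀ x : A, Filter.Tendsto (fun e => e * x) l (nhds x) := by
  let _ := CStarAlgebra.spectralOrder B
  have _ := CStarAlgebra.spectralOrderedRing B
  have h := CStarAlgebra.increasingApproximateUnit B
  have hne := h.neBot
  have hev : ∀ᶠ e in Filter.map (fun b : B => (b : A)) (CStarAlgebra.approximateUnit B),
      e ∈ B ∧ star e = e ∧ ‖e‖ ≤ 1 := by
    rw [Filter.eventually_map]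
    filter_upwards [h.eventually_star_eq, h.eventually_norm] with e h1 h2
    exact ⟨e.2, congrArg (fun b : B => (b : A)) h1, h2⟩
  refine ⟨Filter.map (fun b : B => (b : A)) (CStarAlgebra.approximateUnit B), inferInstance, hev, ?_⟩
  set l := Filter.map (fun b : B => (b : A)) (CStarAlgebra.approximateUnit B)
  have hspan : ∀ x ∈ Submodule.span ℂ {x : A | ∃ b ∈ (B : Set A), ∃ a : A, x = b * a},
      Filter.Tendsto (fun e => e * x) l (nhds x) := by
    intro x hx
    induction hx using Submodule.span_induction with
    | mem x hx =>
      obtain ⟨b, hb, a, rfl⟩ := hx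
      have h1 : Filter.Tendsto (fun e => e * b) l (nhds b) := by
        rw [Filter.tendsto_map'_iff]
        exact (continuous_subtype_val.tendsto _).comp (h.tendsto_mul_right ⟨b, hb⟩)
      simpa [mul_assoc] using h1.mul_const a
    | zero => simp
    | add x y _ _ hx hy => simpa [mul_add] using hx.add hy
    | smul c x _ hx => simpa [mul_smul_comm] using hx.const_smul c
  intro x
  have hx : x ∈ closure (Submodule.span ℂ {x : A | ∃ b ∈ (B : Set A), ∃ a : A, x = b * a} : Set A) := by
    rw [show closure _ = _ from hnd]; trivial
  rw [Metric.tendsto_nhds]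
  intro ε hε
  obtain ⟨y, hy, hxy⟩ := Metric.mem_closure_iff.1 hx (ε / 3) (by positivity)
  filter_upwards [hev, Metric.tendsto_nhds.1 (hspan y hy) (ε / 3) (by positivity)] with e he he2
  rw [dist_eq_norm] at *
  have h1 : e * x - x = e * (x - y) + (e * y - y) - (x - y) := by rw [mul_sub]; abel
  have h2 : ‖e * (x - y)‖ ≤ ‖x - y‖ :=
    (norm_mul_le _ _).trans (mul_le_of_le_one_left (norm_nonneg _) he.2.2)
  rw [h1]
  have := norm_sub_le (e * (x - y) + (e * y - y)) (x - y)
  have := norm_add_le (e * (x - y)) (e * y - y)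
  linarith

theorem state_cs {A : Type*} [NonUnitalCStarAlgebra A] (ψ : A →L[ℂ] ℂ) (hψ : IsState ψ)
    (a x : A) : ‖ψ (star a * x)‖ ^ 2 ≤ (ψ (star a * a)).re * ‖x‖ ^ 2 := by
  let _ := CStarAlgebra.spectralOrder A
  have _ := CStarAlgebra.spectralOrderedRing A
  let f : A →ₚ[ℂ] ℂ := PositiveLinearMap.mk₀ ψ.toLinearMap (by
    intro x hx
    obtain ⟨y, rfl⟩ := CStarAlgebra.nonneg_iff_eq_star_mul_self.1 hx
    exact hψ.1 y)
  have h := norm_inner_le_norm (𝕜 := ℂ) (f.toPreGNS a) (f.toPreGNS x)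
  rw [f.preGNS_inner_def] at h
  have ha := f.preGNS_norm_sq (f.toPreGNS a)
  have hx := f.preGNS_norm_sq (f.toPreGNS x)
  have hf : ∀ z, f z = ψ z := fun _ => rfl
  simp only [f.ofPreGNS_toPreGNS, hf] at h ha hx
  have ha' : ‖f.toPreGNS a‖ ^ 2 = (ψ (star a * a)).re := by rw [← ha]; norm_cast
  have hx' : ‖f.toPreGNS x‖ ^ 2 = (ψ (star x * x)).re := by rw [← hx]; norm_cast
  have h2 : (ψ (star x * x)).re ≤ ‖x‖ ^ 2 := by
    calc _ ≤ ‖ψ (star x * x)‖ := Complex.re_le_norm _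
      _ ≤ ‖ψ‖ * ‖star x * x‖ := ψ.le_opNorm _
      _ = _ := by rw [hψ.2, CStarRing.norm_star_mul_self, one_mul, sq]
  calc _ ≤ (‖f.toPreGNS a‖ * ‖f.toPreGNS x‖) ^ 2 := by gcongr
    _ = (ψ (star a * a)).re * (ψ (star x * x)).re := by rw [mul_pow, ha', hx']
    _ ≤ _ := by
      gcongr
      exact (Complex.nonneg_iff.1 (hψ.1 a)).1

theorem state_tendsto {A : Type*} [NonUnitalCStarAlgebra A] (ψ : A →L[ℂ] ℂ) (hψ : IsState ψ)
    (l : Filter A) (hev : ∀ᶠ e in l, star e = e ∧ ‖e‖ ≤ 1)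
    (hl : ∀ x : A, Filter.Tendsto (fun e => e * x) l (nhds x)) :
    Filter.Tendsto (fun e => ψ (e * e)) l (nhds 1) := by
  have hre : ∀ᶠ e in l, ψ (e * e) = ((ψ (e * e)).re : ℂ) := by
    filter_upwards [hev] with e he
    have := hψ.1 e
    rw [he.1] at this
    exact Complex.ext rfl (by simpa using (Complex.nonneg_iff.1 this).2.symm)
  suffices h : Filter.Tendsto (fun e => (ψ (e * e)).re) l (nhds 1) by
    have := (Complex.continuous_ofReal.tendsto 1).comp h
    rw [Complex.ofReal_one] at this
    refine this.congr' ?_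
    filter_upwards [hre] with e he using he.symm
  rw [tendsto_order]
  constructor
  · intro c hc
    -- choose x with ‖ψ x‖ ^ 2 > c * ‖x‖ ^ 2
    obtain ⟨x, hx⟩ : ∃ x, c * ‖x‖ ^ 2 < ‖ψ x‖ ^ 2 := by
      by_contra! hcon
      have : ‖ψ‖ ≤ √c := by
        refine ψ.opNorm_le_bound (Real.sqrt_nonneg _) fun x => ?_
        rcases eq_or_ne x 0 with rfl | hx0
        · simp
        have hxp : 0 < ‖x‖ := norm_pos_iff.2 hx0
        have hc0 : 0 ≤ c := by
          by_contra! hneg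
          nlinarith [hcon x, sq_nonneg ‖ψ x‖, mul_pos hxp hxp]
        rw [← Real.sqrt_sq hxp.le, ← Real.sqrt_mul hc0]
        exact Real.le_sqrt_of_sq_le (hcon x)
      rw [hψ.2] at this
      have h2 : √c < 1 := by
        rw [Real.sqrt_lt' one_pos]; simpa using hc
      linarith
    have hx0 : 0 < ‖x‖ ^ 2 := by
      rcases eq_or_ne x 0 with rfl | hx0
      · simp at hx
      · have := norm_pos_iff.2 hx0
        positivity
    have h1 : Filter.Tendsto (fun e => ‖ψ (e * x)‖ ^ 2) l (nhds (‖ψ x‖ ^ 2)) :=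
      (((ψ.continuous.tendsto x).comp (hl x)).norm).pow 2
    filter_upwards [hev, h1.eventually (lt_mem_nhds hx)] with e he h2
    have := state_cs ψ hψ e x
    rw [he.1] at this
    exact lt_of_mul_lt_mul_right (h2.trans_le this) hx0.le
  · intro c hc
    filter_upwards [hev] with e he
    refine lt_of_le_of_lt ?_ hc
    calc _ ≤ ‖ψ (e * e)‖ := Complex.re_le_norm _
      _ ≤ ‖ψ‖ * ‖e * e‖ := ψ.le_opNorm _
      _ ≤ 1 := by
        rw [hψ.2, one_mul]
        exact (norm_mul_le _ _).trans (mul_le_one₀ he.2 (norm_nonneg _) he.2)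

theorem pos_of_tendsto {A : Type*} [NonUnitalCStarAlgebra A] (τ : A →L[ℂ] ℂ) (hτ : ‖τ‖ ≤ 1)
    (l : Filter A) [l.NeBot] (hev : ∀ᶠ e in l, ‖e‖ ≤ 1)
    (hl : ∀ x : A, Filter.Tendsto (fun e => e * x) l (nhds x))
    (h1 : Filter.Tendsto (fun e => τ (e * e)) l (nhds 1)) (a : A) : 0 ≤ τ (star a * a) := by
  have key : ∀ (x : A) (c : ℂ), ‖τ x + c‖ ≤ ‖(x : Unitization ℂ A) + algebraMap ℂ _ c‖ := by
    intro x c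
    have h2 : Filter.Tendsto (fun e => e * (e * x)) l (nhds x) := by
      rw [tendsto_iff_norm_sub_tendsto_zero]
      have h3 := (tendsto_iff_norm_sub_tendsto_zero.1 (hl x)).const_mul 2
      rw [mul_zero] at h3
      refine squeeze_zero' (Filter.Eventually.of_forall fun _ => norm_nonneg _) ?_ h3
      filter_upwards [hev] with e he
      have h4 : e * (e * x) - x = e * (e * x - x) + (e * x - x) := by rw [mul_sub]; abel
      have h5 : ‖e * (e * x - x)‖ ≤ ‖e * x - x‖ :=
        (norm_mul_le _ _).trans (mul_le_of_le_one_left (norm_nonneg _) he)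
      have := norm_add_le (e * (e * x - x)) (e * x - x)
      rw [h4]; linarith
    have h3 : Filter.Tendsto (fun e => ‖τ (e * (e * x)) + c * τ (e * e)‖) l (nhds ‖τ x + c * 1‖) :=
      (((τ.continuous.tendsto x).comp h2).add (h1.const_mul c)).norm
    rw [mul_one] at h3
    refine le_of_tendsto h3 ?_
    filter_upwards [hev] with e he
    have h4 : τ (e * (e * x)) + c * τ (e * e) = τ (e * (e * x) + c • (e * e)) := by simp
    have h5 : ((e * (e * x) + c • (e * e) : A) : Unitization ℂ A)
        = (e : Unitization ℂ A) * (e * ((x : Unitization ℂ A) + algebraMap ℂ _ c)) := by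
      rw [mul_add, mul_add, ← Algebra.commutes c, ← Algebra.smul_def, mul_smul_comm]
      simp
    have he' : ‖(e : Unitization ℂ A)‖ ≤ 1 := by rwa [Unitization.norm_inr]
    rw [h4]
    calc _ ≤ ‖τ‖ * ‖e * (e * x) + c • (e * e)‖ := τ.le_opNorm _
      _ ≤ ‖e * (e * x) + c • (e * e)‖ := mul_le_of_le_one_left (norm_nonneg _) hτ
      _ = ‖((e * (e * x) + c • (e * e) : A) : Unitization ℂ A)‖ := by rw [Unitization.norm_inr]
      _ ≤ _ := by
        rw [h5]
        refine (norm_mul_le _ _).trans ((mul_le_of_le_one_left (norm_nonneg _) he').trans ?_)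
        exact (norm_mul_le _ _).trans (mul_le_of_le_one_left (norm_nonneg _) he')
  set y := star a * a with hy
  set s := ‖y‖ with hs
  have hYs : ‖(y : Unitization ℂ A)‖ = s := Unitization.norm_inr _
  have hYsa : star (y : Unitization ℂ A) = y := by
    rw [← Unitization.inr_star, hy]; simp
  have hre : ‖τ y - s‖ ≤ s := by
    have := key y (-s)
    rw [← sub_eq_add_neg] at this
    refine this.trans ?_
    let _ := CStarAlgebra.spectralOrder (Unitization ℂ A)
    have _ := CStarAlgebra.spectralOrderedRing (Unitization ℂ A)
    have hpos : (0 : Unitization ℂ A) ≤ y := by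
      have : (y : Unitization ℂ A) = star (a : Unitization ℂ A) * a := by
        rw [← Unitization.inr_star, hy]; simp
      rw [this]
      exact star_mul_self_nonneg _
    have hle : (y : Unitization ℂ A) ≤ algebraMap ℝ _ s := by
      rw [← hYs]
      exact IsSelfAdjoint.le_algebraMap_norm_self hYsa
    have h6 : (y : Unitization ℂ A) + algebraMap ℂ _ (-(s : ℂ)) = -(algebraMap ℝ _ s - y) := by
      rw [map_neg, IsScalarTower.algebraMap_apply ℝ ℂ (Unitization ℂ A)]
      simp [sub_eq_add_neg, add_comm]
    rw [h6, norm_neg]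
    refine (CStarAlgebra.norm_le_norm_of_nonneg_of_le (sub_nonneg.2 hle)
      (sub_le_self _ hpos)).trans ?_
    rw [norm_algebraMap']
    simp [hs]
  have him : ∀ n : ℝ, ‖τ y + n * Complex.I‖ ^ 2 ≤ s ^ 2 + n ^ 2 := by
    intro n
    have h7 := key y (n * Complex.I)
    have h8 : ‖(y : Unitization ℂ A) + algebraMap ℂ _ (n * Complex.I)‖ ^ 2 ≤ s ^ 2 + n ^ 2 := by
      rw [sq, ← CStarRing.norm_star_mul_self]
      have h9 : star ((y : Unitization ℂ A) + algebraMap ℂ _ (n * Complex.I)) *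
          ((y : Unitization ℂ A) + algebraMap ℂ _ (n * Complex.I)) =
          (y : Unitization ℂ A) * y + algebraMap ℂ _ ((n : ℂ) ^ 2) := by
        have h10 : star (algebraMap ℂ (Unitization ℂ A) (n * Complex.I)) =
            - algebraMap ℂ (Unitization ℂ A) (n * Complex.I) := by
          rw [← algebraMap_star_comm, ← map_neg]; simp
        have h11 : algebraMap ℂ (Unitization ℂ A) ((n : ℂ) ^ 2) =
            - (algebraMap ℂ (Unitization ℂ A) (n * Complex.I) *
              algebraMap ℂ (Unitization ℂ A) (n * Complex.I)) := by
          rw [← map_mul, ← map_neg]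
          congr 1
          linear_combination ((n:ℂ)^2) * Complex.I_sq
        rw [star_add, hYsa, h10, h11, mul_add, add_mul, add_mul, ← Algebra.commutes]
        noncomm_ring
      rw [h9]
      refine (norm_add_le _ _).trans ?_
      gcongr
      · exact (norm_mul_le _ _).trans (by rw [hYs, sq])
      · rw [norm_algebraMap']; simp
    exact le_trans (by gcongr) h8
  have hre2 : 0 ≤ (τ y).re := by
    have := (Complex.abs_re_le_norm (τ y - s)).trans hre
    have := (abs_le.1 this).1
    simp at this
    linarith
  have him2 : (τ y).im = 0 := by
    by_contra hne
    set β := (τ y).im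
    have h12 : β * ((s ^ 2 + 1) / β) = s ^ 2 + 1 := by field_simp
    generalize (s ^ 2 + 1) / β = n at h12
    have := him n
    rw [Complex.sq_norm, Complex.normSq_apply] at this
    simp at this
    change _ + (β + _) * (β + _) ≤ _ at this
    nlinarith [sq_nonneg β, sq_nonneg (τ y).re, sq_nonneg s]
  exact Complex.nonneg_iff.2 ⟨hre2, him2.symm⟩

/-- If every `φ ∈ Φ` admits a unique state extension `σ φ` to `A` and the
family `{σ φ}` is jointly essentially faithful, then the non-degenerate inclusion `B ⊆ A`
is essential. -/
theorem stmt0 {A : Type*} [NonUnitalCStarAlgebra A]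
    (B : NonUnitalStarSubalgebra ℂ A) (hBclosed : IsClosed (B : Set A))
    (hnd : NondegSet (B : Set A))
    (Φ : Set (↥B →L[ℂ] ℂ)) (hΦ : ∀ φ ∈ Φ, IsState φ)
    (σ : (↥B →L[ℂ] ℂ) → (A →L[ℂ] ℂ))
    (hσstate : ∀ φ ∈ Φ, IsState (σ φ))
    (hσext : ∀ φ ∈ Φ, ∀ b : ↥B, σ φ (b : A) = φ b)
    (hσuniq : ∀ φ ∈ Φ, ∀ τ : A →L[ℂ] ℂ, IsState τ → (∀ b : ↥B, τ (b : A) = φ b) → τ = σ φ)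
    (hfaith : (⋂ φ ∈ Φ, Kset ⇑(σ φ)) = ({0} : Set A)) :
    EssentialIncl (B : Set A) := by
  intro L hLc _ hBL
  let J : Submodule ℂ A :=
    { carrier := {x | x ∈ L ∧ star x ∈ L}
      add_mem' := by
        intro x y hx hy
        exact ⟨L.add_mem hx.1 hy.1, by rw [star_add]; exact L.add_mem hx.2 hy.2⟩
      zero_mem' := ⟨L.zero_mem, by rw [star_zero]; exact L.zero_mem⟩
      smul_mem' := by
        intro c x hx
        exact ⟨smul_mem_closed L hLc c x hx.1, by
          rw [star_smul]; exact smul_mem_closed L hLc _ _ hx.2⟩ }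
  have hJl : ∀ a x, x ∈ J → a * x ∈ J := fun a x hx =>
    ⟨L.mul_mem_left _ _ hx.1, by rw [star_mul]; exact L.mul_mem_right _ _ hx.2⟩
  have hJr : ∀ a x, x ∈ J → x * a ∈ J := fun a x hx =>
    ⟨L.mul_mem_right _ _ hx.1, by rw [star_mul]; exact L.mul_mem_left _ _ hx.2⟩
  have hJs : ∀ x ∈ J, star x ∈ J := fun x hx => ⟨hx.2, by rw [star_star]; exact hx.1⟩
  have hJc : IsClosed (J : Set A) := hLc.inter (hLc.preimage continuous_star)
  have hBJ : ∀ b ∈ B, b ∈ J → b = 0 := by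
    intro b hb hbJ
    have : b ∈ (B : Set A) ∩ (L : Set A) := ⟨hb, hbJ.1⟩
    rw [hBL] at this
    exact this
  have hnorm := norm_le_gen B hBclosed J hJl hJr hJs hJc hBJ
  obtain ⟨l, hlne, hev, hl⟩ := exists_approx B hBclosed hnd
  -- every `σ φ` vanishes on `J`
  have hvan : ∀ φ ∈ Φ, ∀ x ∈ J, σ φ x = 0 := by
    intro φ hφ
    let g : (↥B × ↥J) →ₗ[ℂ] A :=
      { toFun := fun p => (p.1 : A) + (p.2 : A)
        map_add' := by
          intro p q
          simp only [Prod.fst_add, Prod.snd_add, NonUnitalStarSubalgebra.coe_add,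
            Submodule.coe_add]
          abel
        map_smul' := by
          intro c p
          simp }
    have hgn : ∀ p, ‖p.1‖ ≤ ‖g p‖ := fun p =>
      hnorm p.1 (g p) p.1.2 (by
        have : g p - (p.1 : A) = p.2 := add_sub_cancel_left _ _
        rw [this]; exact p.2.2)
    have hginj : Function.Injective g := by
      rw [← LinearMap.ker_eq_bot, LinearMap.ker_eq_bot']
      intro p hp
      have h1 := hgn p
      rw [hp, norm_zero] at h1
      have h2 : p.1 = 0 := norm_le_zero_iff.1 h1
      have h3 : (p.1 : A) + (p.2 : A) = 0 := hp
      rw [h2] at h3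
      exact Prod.ext h2 (Subtype.ext (by simpa using h3))
    let e := LinearEquiv.ofInjective g hginj
    let f0 : ↥(LinearMap.range g) →ₗ[ℂ] ℂ :=
      φ.toLinearMap ∘ₗ LinearMap.fst ℂ ↥B ↥J ∘ₗ e.symm.toLinearMap
    have hf0 : ∀ p, f0 (e p) = φ p.1 := by intro p; simp [f0]
    have hf0b : ∀ x, ‖f0 x‖ ≤ 1 * ‖x‖ := by
      intro x
      obtain ⟨p, rfl⟩ := e.surjective x
      rw [hf0, one_mul]
      calc _ ≤ ‖φ‖ * ‖p.1‖ := φ.le_opNorm _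
        _ = ‖p.1‖ := by rw [(hΦ φ hφ).2, one_mul]
        _ ≤ ‖g p‖ := hgn p
        _ = _ := rfl
    obtain ⟨τ, hτ, hτn⟩ := exists_extension_norm_eq (LinearMap.range g) (f0.mkContinuous 1 hf0b)
    have hτ1 : ‖τ‖ ≤ 1 := by
      rw [hτn]; exact LinearMap.mkContinuous_norm_le _ zero_le_one _
    have hτg : ∀ p, τ (g p) = φ p.1 := fun p => (hτ (e p)).trans (hf0 p)
    have hτB : ∀ b : ↥B, τ (b : A) = φ b := by
      intro b
      have := hτg (b, 0)
      simpa [g] using this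
    have hσ1 := state_tendsto (σ φ) (hσstate φ hφ) l (hev.mono fun _ h => h.2) hl
    have hτt : Filter.Tendsto (fun e => τ (e * e)) l (nhds 1) := by
      refine hσ1.congr' ?_
      filter_upwards [hev] with u hu
      have h1 := hσext φ hφ ⟨u * u, mul_mem hu.1 hu.1⟩
      have h2 := hτB ⟨u * u, mul_mem hu.1 hu.1⟩
      exact h1.trans h2.symm
    have hτs : IsState τ := by
      refine ⟨pos_of_tendsto τ hτ1 l (hev.mono fun _ h => h.2.2) hl hτt, le_antisymm hτ1 ?_⟩
      rw [← (hΦ φ hφ).2]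
      refine φ.opNorm_le_bound (norm_nonneg _) fun b => ?_
      rw [← hτB]
      exact τ.le_opNorm _
    have heq := hσuniq φ hφ τ hτs hτB
    intro x hx
    rw [← heq]
    have := hτg (0, ⟨x, hx⟩)
    simpa [g] using this
  have hJ0 : ∀ x ∈ J, x = 0 := by
    intro x hx
    have : x ∈ ⋂ φ ∈ Φ, Kset ⇑(σ φ) := by
      simp only [Set.mem_iInter]
      intro φ hφ a b
      exact hvan φ hφ _ (hJr _ _ (hJl _ _ hx))
    rw [hfaith] at this
    exact this
  apply Set.eq_singleton_iff_unique_mem.2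
  refine ⟨L.zero_mem, fun x hx => ?_⟩
  have h1 : star x * x ∈ L := L.mul_mem_left _ _ hx
  have h2 : star x * x = 0 := hJ0 _ ⟨h1, by simpa using h1⟩
  exact CStarRing.star_mul_self_eq_zero_iff x |>.1 h2
end

section
/- Let B ⊆ A be a non-degenerate C*-inclusion and J a proper closed two-sided ideal of A. The following are equivalent: (i) J is dominant relative to B, i.e. every proper closed two-sided ideal L of A with B ∩ L ⊆ B ∩ J satisfies L ⊆ J; (ii) there exists a set Φ of states of B vanishing on B ∩ J such that every A-lift Σ of Φ is subordinated to J; (iii) there exists a set Φ of pure states of B vanishing on B ∩ J such that every A-lift Σ of Φ is subordinated to J; (iii') there exists a set Φ of pure states of B vanishing on B ∩ J such that every pure A-lift Σ of Φ is subordinated to J. -/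
open scoped ComplexOrder

/-- A pure state: an extreme point of the set of states. -/
def IsPureState {E : Type*} [SeminormedAddCommGroup E] [NormedSpace ℂ E] [Mul E] [Star E]
    (φ : E →L[ℂ] ℂ) : Prop :=
  φ ∈ Set.extremePoints ℝ {ψ : E →L[ℂ] ℂ | IsState ψ}

section Aux
attribute [local instance] CStarAlgebra.spectralOrder CStarAlgebra.spectralOrderedRing
variable {E : Type*} [NonUnitalCStarAlgebra E]

/-- Approximate left/right unit attached to a self-adjoint element of an ideal. -/
lemma aux_e (L : TwoSidedIdeal E) (a : E) (ha : IsSelfAdjoint a) (haL : a ∈ L) (ε : ℝ)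
    (hε : 0 < ε) : ∃ e ∈ L, IsSelfAdjoint e ∧ ‖e‖ ≤ 1 ∧
      ‖a - e * a - a * e + e * a * e‖ ≤ ε := by
  have hpos : ∀ t : ℝ, t ^ 2 + ε ^ 2 ≠ 0 := fun t => by positivity
  have hg : Continuous (fun t : ℝ => t / (t ^ 2 + ε ^ 2)) :=
    continuous_id.div (by fun_prop) hpos
  have hf : Continuous (fun t : ℝ => t ^ 2 / (t ^ 2 + ε ^ 2)) :=
    Continuous.div (by fun_prop) (by fun_prop) hpos
  set f : ℝ → ℝ := fun t => t ^ 2 / (t ^ 2 + ε ^ 2) with hfdef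
  have hf0 : f 0 = 0 := by simp [f]
  have hfeq : cfcₙ f a = a * cfcₙ (fun t : ℝ => t / (t ^ 2 + ε ^ 2)) a := by
    have h0 := cfcₙ_mul (fun t : ℝ => t) (fun t : ℝ => t / (t ^ 2 + ε ^ 2)) a
      (by fun_prop) (by simp) hg.continuousOn (by simp)
    rw [cfcₙ_id' ℝ a] at h0
    rw [← h0]
    refine cfcₙ_congr fun t _ => ?_
    simp only [f]; ring
  refine ⟨cfcₙ f a, ?_, cfcₙ_predicate f a, ?_, ?_⟩
  · rw [hfeq]; exact L.mul_mem_right _ _ haL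
  · refine norm_cfcₙ_le fun t _ => ?_
    rw [Real.norm_of_nonneg (by positivity)]
    rw [div_le_one (by positivity)]
    nlinarith
  · have h1 : a - cfcₙ f a * a - a * cfcₙ f a + cfcₙ f a * a * cfcₙ f a
        = cfcₙ (fun t : ℝ => t - f t * t - t * f t + f t * t * f t) a := by
      have hfc : ContinuousOn f (quasispectrum ℝ a) := hf.continuousOn
      rw [cfcₙ_add (a := a) (fun t : ℝ => t - f t * t - t * f t) (fun t => f t * t * f t),
        cfcₙ_sub (a := a) (fun t : ℝ => t - f t * t) (fun t => t * f t),
        cfcₙ_sub (a := a) (fun t : ℝ => t) (fun t => f t * t),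
        cfcₙ_mul (a := a) (fun t => f t * t) f,
        cfcₙ_mul (a := a) f (fun t => t), cfcₙ_mul (a := a) (fun t => t) f, cfcₙ_id' ℝ a]

    rw [h1]
    refine norm_cfcₙ_le fun t _ => ?_
    have h2 : t - f t * t - t * f t + f t * t * f t = (t * ε / (t ^ 2 + ε ^ 2)) *
        (ε ^ 2 / (t ^ 2 + ε ^ 2)) * ε := by
      simp only [f]; have := hpos t; field_simp; ring
    rw [h2, norm_mul, norm_mul, Real.norm_of_nonneg hε.le]
    have h3 : ‖t * ε / (t ^ 2 + ε ^ 2)‖ ≤ 1 := by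
      rw [norm_div, Real.norm_of_nonneg (show 0 ≤ t ^ 2 + ε ^ 2 by positivity),
        div_le_one (by positivity), Real.norm_eq_abs, abs_le]
      constructor <;> nlinarith [sq_nonneg (t - ε), sq_nonneg (t + ε)]
    have h4 : ‖ε ^ 2 / (t ^ 2 + ε ^ 2)‖ ≤ 1 := by
      rw [Real.norm_of_nonneg (by positivity), div_le_one (by positivity)]
      nlinarith
    have := mul_le_one₀ h3 (norm_nonneg _) h4
    nlinarith

lemma aux_compress_nonneg (e w : E) (he : IsSelfAdjoint e) (hw : 0 ≤ w) :
    0 ≤ w - e * w - w * e + e * w * e := by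
  obtain ⟨s, rfl⟩ := CStarAlgebra.nonneg_iff_eq_star_mul_self.mp hw
  have : star s * s - e * (star s * s) - star s * s * e + e * (star s * s) * e
      = star (s - s * e) * (s - s * e) := by
    simp only [star_sub, star_mul, he.star_eq]; noncomm_ring
  rw [this]; exact star_mul_self_nonneg _

lemma aux_compress_norm (e z : E) (he : ‖e‖ ≤ 1) :
    ‖z - e * z - z * e + e * z * e‖ ≤ 4 * ‖z‖ := by
  have h1 : ‖e * z‖ ≤ ‖z‖ := (norm_mul_le _ _).trans (by nlinarith [norm_nonneg z])
  have h2 : ‖z * e‖ ≤ ‖z‖ := (norm_mul_le _ _).trans (by nlinarith [norm_nonneg z])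
  have h3 : ‖e * z * e‖ ≤ ‖z‖ := (norm_mul_le _ _).trans (by nlinarith [norm_nonneg (e * z), norm_nonneg e])
  calc _ ≤ ‖z‖ + ‖e * z‖ + ‖z * e‖ + ‖e * z * e‖ :=
        (norm_add_le _ _).trans (add_le_add_left ((norm_sub_le _ _).trans
          (add_le_add_left (norm_sub_le _ _) _)) _)
    _ ≤ _ := by linarith

/-- hereditary-type lemma -/
lemma aux_hered (L : TwoSidedIdeal E) (hL : IsClosed (L : Set E)) (s z : E) (hz : z ∈ L)
    (h : star s * s ≤ z) : s ∈ L := by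
  have hz0 : 0 ≤ z := (star_mul_self_nonneg s).trans h
  rw [← SetLike.mem_coe, ← hL.closure_eq, Metric.mem_closure_iff]
  intro ε hε
  obtain ⟨e, heL, hesa, he1, hez⟩ := aux_e L z hz0.isSelfAdjoint hz (ε ^ 2 / 4) (by positivity)
  refine ⟨s * e, L.mul_mem_left _ _ heL, ?_⟩
  rw [dist_eq_norm]
  have key : ‖s - s * e‖ * ‖s - s * e‖ ≤ ε ^ 2 / 4 := by
    rw [← CStarRing.norm_star_mul_self]
    refine le_trans (CStarAlgebra.norm_le_norm_of_nonneg_of_le (star_mul_self_nonneg _) ?_) hez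
    have := aux_compress_nonneg e (z - star s * s) hesa (sub_nonneg.mpr h)
    rw [← sub_nonneg]
    convert this using 1
    simp only [star_sub, star_mul, hesa.star_eq]; noncomm_ring
  nlinarith [norm_nonneg (s - s * e)]

lemma aux_star_mem (L : TwoSidedIdeal E) (hL : IsClosed (L : Set E)) (l : E) (hl : l ∈ L) :
    star l ∈ L :=
  aux_hered L hL (star l) (l * star l) (L.mul_mem_right _ _ hl) (by simp)

lemma aux_smul_mem (L : TwoSidedIdeal E) (hL : IsClosed (L : Set E)) (c : ℂ) (l : E)
    (hl : l ∈ L) : c • l ∈ L := by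
  have hu := CStarAlgebra.increasingApproximateUnit E
  have h1 : Filter.Tendsto (fun e : E => c • (l * e)) (CStarAlgebra.approximateUnit E)
      (nhds (c • l)) := (hu.tendsto_mul_left l).const_smul c
  refine hL.mem_of_tendsto h1 (Filter.Eventually.of_forall fun e => ?_)
  rw [← mul_smul_comm]
  exact L.mul_mem_right _ _ hl



lemma pos_nonneg (φ : E →L[ℂ] ℂ) (hφ : ∀ a : E, 0 ≤ φ (star a * a)) (a : E) (ha : 0 ≤ a) :
    0 ≤ φ a := by
  obtain ⟨s, rfl⟩ := CStarAlgebra.nonneg_iff_eq_star_mul_self.mp ha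
  exact hφ s

lemma pos_cs (φ : E →L[ℂ] ℂ) (hφ : ∀ a : E, 0 ≤ φ (star a * a)) (a b : E) :
    ‖φ (star a * b)‖ ^ 2 ≤ ‖φ (star a * a)‖ * ‖φ (star b * b)‖ := by
  let f : E →ₚ[ℂ] ℂ := PositiveLinearMap.mk₀ (φ : E →ₗ[ℂ] ℂ) (pos_nonneg φ hφ)
  have hf : ∀ x, f x = φ x := fun x => rfl
  have h := norm_inner_le_norm (𝕜 := ℂ) (f.toPreGNS a) (f.toPreGNS b)
  rw [PositiveLinearMap.preGNS_inner_def] at h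
  have h1 : ∀ x : E, ‖f.toPreGNS x‖ ^ 2 = ‖φ (star x * x)‖ := fun x => by
    have := f.preGNS_norm_sq (f.toPreGNS x)
    have h2 : ((‖f.toPreGNS x‖ ^ 2 : ℝ) : ℂ) = φ (star x * x) := by
      push_cast; exact this
    rw [← h2, Complex.norm_real, Real.norm_of_nonneg (by positivity)]
  rw [← h1, ← h1, ← mul_pow]
  exact pow_le_pow_left₀ (norm_nonneg _) h 2

lemma pos_cs2 (φ : E →L[ℂ] ℂ) (hφ : ∀ a : E, 0 ≤ φ (star a * a)) (a : E) :
    ‖φ a‖ ^ 2 ≤ ‖φ‖ * ‖φ (star a * a)‖ := by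
  have hu := CStarAlgebra.increasingApproximateUnit E
  have h1 : Filter.Tendsto (fun e : E => ‖φ (e * a)‖ ^ 2) (CStarAlgebra.approximateUnit E)
      (nhds (‖φ a‖ ^ 2)) :=
    (((φ.continuous.tendsto _).comp (hu.tendsto_mul_right a)).norm).pow 2
  refine le_of_tendsto h1 ?_
  filter_upwards [hu.eventually_norm, hu.eventually_star_eq] with e he hes
  have h2 := pos_cs φ hφ e a
  rw [hes] at h2
  refine h2.trans (mul_le_mul_of_nonneg_right ?_ (norm_nonneg _))
  refine (φ.le_opNorm _).trans (mul_le_of_le_one_right (norm_nonneg _) ?_)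
  exact (norm_mul_le _ _).trans (mul_le_one₀ he (norm_nonneg _) he)

lemma pos_zero (φ : E →L[ℂ] ℂ) (hφ : ∀ a : E, 0 ≤ φ (star a * a)) (a : E)
    (h : φ (star a * a) = 0) : φ a = 0 := by
  have := pos_cs2 φ hφ a
  rw [h, norm_zero, mul_zero] at this
  exact norm_eq_zero.mp (pow_eq_zero_iff two_ne_zero |>.mp (le_antisymm this (by positivity)))

lemma sq_le_self_of (e : E) (he : 0 ≤ e) (h1 : ‖e‖ ≤ 1) : e * e ≤ e := by
  obtain ⟨s, hs, rfl⟩ : ∃ s : E, IsSelfAdjoint s ∧ e = s * s :=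
    ⟨CFC.sqrt e, (CFC.sqrt_nonneg e).isSelfAdjoint, (CFC.sqrt_mul_sqrt_self e he).symm⟩
  have h := CStarAlgebra.star_left_conjugate_le_norm_smul (a := s) (b := s * s) he.isSelfAdjoint
  rw [hs.star_eq] at h
  calc s * s * (s * s) = s * (s * s) * s := by noncomm_ring
    _ ≤ ‖s * s‖ • (s * s) := h
    _ ≤ (1 : ℝ) • (s * s) := smul_le_smul_of_nonneg_right h1 he
    _ = _ := one_smul _ _

lemma state_tendsto_s4 (φ : E →L[ℂ] ℂ) (hφ : IsState φ) :
    Filter.Tendsto (fun e : E => φ e) (CStarAlgebra.approximateUnit E) (nhds 1) := by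
  have hu := CStarAlgebra.increasingApproximateUnit E
  have key : ∀ r : ℝ, r < 1 → ∀ᶠ e in CStarAlgebra.approximateUnit E, r < ‖φ e‖ := by
    intro r hr
    obtain ⟨b, hb1, hb⟩ : ∃ b : E, ‖b‖ ≤ 1 ∧ r < ‖φ b‖ ^ 2 := by
      by_contra! hcon
      have hr0 : 0 ≤ r := (by positivity : (0:ℝ) ≤ ‖φ 0‖ ^ 2).trans (hcon 0 (by simp))
      have : ‖φ‖ ≤ Real.sqrt r := by
        refine φ.opNorm_le_of_unit_norm (Real.sqrt_nonneg r) ?_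
        intro x hx
        exact Real.le_sqrt_of_sq_le (hcon x hx.le)
      rw [hφ.2, Real.one_le_sqrt] at this
      linarith
    have h1 : Filter.Tendsto (fun e : E => ‖φ (e * b)‖ ^ 2) (CStarAlgebra.approximateUnit E)
        (nhds (‖φ b‖ ^ 2)) :=
      (((φ.continuous.tendsto _).comp (hu.tendsto_mul_right b)).norm).pow 2
    filter_upwards [h1.eventually_const_lt hb, hu.eventually_norm, hu.eventually_star_eq,
      hu.eventually_nonneg] with e h he hes he0
    have h2 := pos_cs φ hφ.1 e b
    rw [hes] at h2
    have h3 : ‖φ (star b * b)‖ ≤ 1 := by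
      refine (φ.le_opNorm _).trans ?_
      rw [hφ.2, one_mul, CStarRing.norm_star_mul_self]
      exact mul_le_one₀ hb1 (norm_nonneg _) hb1
    have h4 : ‖φ (e * e)‖ ≤ ‖φ e‖ := by
      have h5 : 0 ≤ φ (e * e) := by have := hφ.1 e; rwa [hes] at this
      have h6 : φ (e * e) ≤ φ e := by
        rw [← sub_nonneg, ← map_sub]
        exact pos_nonneg φ hφ.1 _ (sub_nonneg.mpr (sq_le_self_of e he0 he))
      have h7 := h5.trans h6
      rw [Complex.eq_coe_norm_of_nonneg h5, Complex.eq_coe_norm_of_nonneg h7] at h6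
      exact_mod_cast h6
    calc r < _ := h
      _ ≤ _ := h2
      _ ≤ ‖φ (e * e)‖ := mul_le_of_le_one_right (norm_nonneg _) h3
      _ ≤ _ := h4
  have h1 : Filter.Tendsto (fun e : E => ‖φ e‖) (CStarAlgebra.approximateUnit E) (nhds 1) := by
    refine tendsto_order.2 ⟨key, fun r hr => ?_⟩
    filter_upwards [hu.eventually_norm] with e he
    refine ((φ.le_opNorm _).trans ?_).trans_lt hr
    rw [hφ.2, one_mul]; exact he
  have h2 : Filter.Tendsto (fun e : E => ((‖φ e‖ : ℝ) : ℂ)) (CStarAlgebra.approximateUnit E)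
      (nhds ((1 : ℝ) : ℂ)) := (Complex.continuous_ofReal.tendsto 1).comp h1
  rw [Complex.ofReal_one] at h2
  refine h2.congr' ?_
  filter_upwards [hu.eventually_nonneg] with e he0
  exact (Complex.eq_coe_norm_of_nonneg (pos_nonneg φ hφ.1 e he0)).symm

/-- Norm-one functionals taking limit value `1` along an approximate unit are positive. -/
lemma pos_of_tendsto_s4 {ι : Type*} (u : Filter ι) [u.NeBot] (j : ι → E) (σ : E →L[ℂ] ℂ)
    (hσ : ‖σ‖ ≤ 1) (hj1 : ∀ᶠ i in u, ‖j i‖ ≤ 1) (hjs : ∀ᶠ i in u, star (j i) = j i)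
    (hja : ∀ a : E, Filter.Tendsto (fun i => a * j i) u (nhds a))
    (hlim : Filter.Tendsto (fun i => σ (j i)) u (nhds 1)) (a : E) : 0 ≤ σ (star a * a) := by
  have main : ∀ a : E, 0 ≤ a → ‖a‖ ≤ 1 → 0 ≤ σ a := by
    intro a ha ha1
    have hbound : ∀ x : E, ‖σ x‖ ≤ ‖x‖ := fun x =>
      (σ.le_opNorm x).trans (mul_le_of_le_one_left (norm_nonneg _) hσ)
    have him : ∀ n : ℝ, ‖σ a + Complex.I * n‖ ^ 2 ≤ 1 + n ^ 2 := by
      intro n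
      have ht : Filter.Tendsto (fun i => ‖σ (a * j i + (Complex.I * n) • j i)‖ ^ 2) u
          (nhds (‖σ a + Complex.I * n‖ ^ 2)) := by
        have h1 : Filter.Tendsto (fun i => σ (a * j i) + (Complex.I * n) * σ (j i)) u
            (nhds (σ a + Complex.I * n * 1)) :=
          ((σ.continuous.tendsto _).comp (hja a)).add (hlim.const_mul _)
        rw [mul_one] at h1
        refine (h1.norm.pow 2).congr fun i => ?_
        rw [map_add, map_smul, smul_eq_mul]
      refine le_of_tendsto ht ?_
      filter_upwards [hj1, hjs] with i h1 hs
      refine (pow_le_pow_left₀ (norm_nonneg _) (hbound _) 2).trans ?_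
      rw [sq, ← CStarRing.norm_star_mul_self]
      have h2 : star (a * j i + (Complex.I * n) • j i) * (a * j i + (Complex.I * n) • j i)
          = j i * a * (a * j i) + ((n ^ 2 : ℝ) : ℂ) • (j i * j i) := by
        have h3 : star (Complex.I * (n : ℂ)) = - (Complex.I * n) := by simp
        have h4 : Complex.I * (n : ℂ) * (Complex.I * n) = -((n ^ 2 : ℝ) : ℂ) := by
          push_cast
          calc _ = Complex.I * Complex.I * (n:ℂ) ^ 2 := by ring
            _ = _ := by rw [Complex.I_mul_I]; ring
        generalize Complex.I * (n : ℂ) = c at h3 h4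
        generalize ((n ^ 2 : ℝ) : ℂ) = m at h4
        have h5 : m • (j i * j i) = -(c • c • (j i * j i)) := by
          rw [smul_smul, h4, neg_smul, neg_neg]
        rw [h5]
        simp only [star_add, star_mul, star_smul, hs, ha.isSelfAdjoint.star_eq, h3, add_mul,
          mul_add, smul_mul_assoc, mul_smul_comm, mul_assoc, neg_smul, neg_mul, smul_add, smul_neg]
        abel
      rw [h2]
      have h6 : ‖a * j i‖ ≤ 1 := (norm_mul_le _ _).trans (mul_le_one₀ ha1 (norm_nonneg _) h1)
      have h7 : ‖j i * a‖ ≤ 1 := (norm_mul_le _ _).trans (mul_le_one₀ h1 (norm_nonneg _) ha1)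
      have h8 : ‖j i * j i‖ ≤ 1 := (norm_mul_le _ _).trans (mul_le_one₀ h1 (norm_nonneg _) h1)
      refine (norm_add_le _ _).trans (add_le_add
        ((norm_mul_le _ _).trans (mul_le_one₀ h7 (norm_nonneg _) h6)) ?_)
      rw [norm_smul, Complex.norm_real, Real.norm_of_nonneg (by positivity)]
      exact mul_le_of_le_one_right (by positivity) h8
    have hre : ‖1 - σ a‖ ≤ 1 := by
      have ht : Filter.Tendsto (fun i => ‖σ (j i - a * j i)‖) u (nhds ‖1 - σ a‖) := by
        refine ((hlim.sub ((σ.continuous.tendsto _).comp (hja a))).norm).congr fun i => ?_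
        simp
      refine le_of_tendsto ht ?_
      filter_upwards [hj1, hjs] with i h1 hs
      refine (hbound _).trans ?_
      have h2 : ‖j i - a * j i‖ * ‖j i - a * j i‖ ≤ 1 := by
        rw [← CStarRing.norm_star_mul_self]
        have h3 : star (j i - a * j i) * (j i - a * j i) ≤ j i * j i := by
          have h4 : 0 ≤ j i * (a + (a - a * a)) * j i := by
            have := star_left_conjugate_nonneg
              (add_nonneg ha (sub_nonneg.mpr (sq_le_self_of a ha ha1))) (j i)
            rwa [hs] at this
          rw [← sub_nonneg]
          convert h4 using 1
          simp only [star_sub, star_mul, hs, ha.isSelfAdjoint.star_eq]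
          noncomm_ring
        refine (CStarAlgebra.norm_le_norm_of_nonneg_of_le (star_mul_self_nonneg _) h3).trans ?_
        exact (norm_mul_le _ _).trans (mul_le_one₀ h1 (norm_nonneg _) h1)
      nlinarith [norm_nonneg (j i - a * j i)]
    have him0 : (σ a).im = 0 := by
      have hn : ∀ n : ℝ, ((σ a).im + n) ^ 2 ≤ 1 + n ^ 2 := fun n => by
        refine le_trans ?_ (him n)
        have := Complex.abs_im_le_norm (σ a + Complex.I * n)
        rw [← sq_abs]
        refine pow_le_pow_left₀ (abs_nonneg _) ?_ 2
        simpa using this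
      by_contra hne
      have h1 := hn ((σ a).im⁻¹)
      have h2 := hn (2 * (σ a).im⁻¹)
      have h3 : (σ a).im * (σ a).im⁻¹ = 1 := mul_inv_cancel₀ hne
      nlinarith [sq_nonneg (σ a).im]
    have hre0 : 0 ≤ (σ a).re := by
      have := (Complex.re_le_norm (1 - σ a)).trans hre
      simp at this
      exact this
    rw [Complex.le_def]
    exact ⟨by simpa using hre0, by simp [him0]⟩
  by_cases h0 : ‖star a * a‖ = 0
  · rw [norm_eq_zero.mp h0]; simp
  · have hx := star_mul_self_nonneg a
    set x := star a * a
    have h1 : 0 ≤ σ ((‖x‖⁻¹ : ℝ) • x) := by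
      refine main _ (smul_nonneg (by positivity) hx) ?_
      rw [norm_smul, norm_inv, norm_norm, inv_mul_cancel₀ h0]
    have h2 : σ x = ((‖x‖ : ℝ) : ℂ) * σ ((‖x‖⁻¹ : ℝ) • x) := by
      rw [← smul_eq_mul, ← map_smul, Complex.coe_smul, smul_smul, mul_inv_cancel₀ h0, one_smul]
    rw [h2]
    exact mul_nonneg (by simp) h1

lemma km_extreme (Q : Set (E →L[ℂ] ℂ)) (hQ : Convex ℝ Q) (hb : ∀ φ ∈ Q, ‖φ‖ ≤ 1)
    (hcl : IsClosed {φ : WeakDual ℂ E | WeakDual.toStrongDual φ ∈ Q}) (ψ : E →L[ℂ] ℂ) (hψ : ψ ∈ Q)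
    (c : E) (hc : ψ c ≠ 0) : ∃ φ ∈ Set.extremePoints ℝ Q, φ c ≠ 0 := by
  by_contra! hcon
  set Q' : Set (WeakDual ℂ E) := {φ : WeakDual ℂ E | WeakDual.toStrongDual φ ∈ Q} with hQ'
  have hcomp : IsCompact Q' := by
    refine (WeakDual.isCompact_closedBall (𝕜 := ℂ) (0 : StrongDual ℂ E) 1).of_isClosed_subset hcl ?_
    intro φ hφ
    have h1 : ‖WeakDual.toStrongDual φ‖ ≤ 1 := hb _ hφ
    simpa using h1
  set P : Set (E → ℂ) := Set.image (fun φ : E →L[ℂ] ℂ => (φ : E → ℂ)) Q with hP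
  have hPcomp : IsCompact P := by
    have h1 := hcomp.image (f := fun φ : WeakDual ℂ E => (fun x => φ x : E → ℂ))
      (continuous_pi fun x => WeakDual.eval_continuous x)
    have h2 : P = Set.image (fun φ : WeakDual ℂ E => (fun x => φ x : E → ℂ)) Q' := by
      ext f
      constructor
      · rintro ⟨φ, h, rfl⟩
        exact ⟨StrongDual.toWeakDual φ, h, rfl⟩
      · rintro ⟨φ, h, rfl⟩
        exact ⟨WeakDual.toStrongDual φ, h, rfl⟩
    rw [h2]; exact h1
  have hPconv : Convex ℝ P := by
    rintro _ ⟨x, hx, rfl⟩ _ ⟨y, hy, rfl⟩ s t hs ht hst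
    exact ⟨s • x + t • y, hQ hx hy hs ht hst, rfl⟩
  have hKM := closure_convexHull_extremePoints hPcomp hPconv
  have hsub : closure (convexHull ℝ (Set.extremePoints ℝ P)) ⊆ {f : E → ℂ | f c = 0} := by
    refine closure_minimal (convexHull_min ?_ ?_) ?_
    · rintro _ ⟨⟨φ, hφ, rfl⟩, hext⟩
      refine hcon φ ⟨hφ, fun x hx y hy hxy => ?_⟩
      have h2 := hext ⟨x, hx, rfl⟩ ⟨y, hy, rfl⟩ (by
        obtain ⟨s, t, hs, ht, hst, h⟩ := hxy
        exact ⟨s, t, hs, ht, hst, by rw [← h]; rfl⟩)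
      exact DFunLike.coe_injective h2
    · intro x hx y hy s t hs ht hst
      have hx' : x c = 0 := hx
      have hy' : y c = 0 := hy
      change s • x c + t • y c = 0
      rw [hx', hy']; simp
    · exact isClosed_eq (continuous_apply c) continuous_const
  rw [hKM] at hsub
  exact hc (hsub ⟨ψ, hψ, rfl⟩)

end Aux

section Inclusion
attribute [local instance] CStarAlgebra.spectralOrder CStarAlgebra.spectralOrderedRing
variable {A : Type*} [NonUnitalCStarAlgebra A]

variable {D : Type*} [NonUnitalCStarAlgebra D]

lemma nondeg_tendsto (ι : D →⋆ₙₐ[ℂ] A) (hι : ∀ d, ‖ι d‖ = ‖d‖)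
    (hnd : NondegSet (Set.range ι)) (a : A) :
    Filter.Tendsto (fun e : D => ι e * a) (CStarAlgebra.approximateUnit D) (nhds a) := by
  have hιc : Continuous ι := (AddMonoidHomClass.isometry_of_norm ι hι).continuous
  have hu := CStarAlgebra.increasingApproximateUnit D
  let S : Submodule ℂ A :=
    { carrier := {a | Filter.Tendsto (fun e : D => ι e * a)
        (CStarAlgebra.approximateUnit D) (nhds a)}
      zero_mem' := by simp
      add_mem' := fun {x y} hx hy => by
        simp only [Set.mem_ofPred_eq, mul_add]
        exact Filter.Tendsto.add hx hy
      smul_mem' := fun c x hx => by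
        simp only [Set.mem_ofPred_eq, mul_smul_comm]
        exact Filter.Tendsto.const_smul hx c }
  have hS : Submodule.span ℂ {x : A | ∃ b ∈ Set.range ι, ∃ a : A, x = b * a} ≤ S := by
    rw [Submodule.span_le]
    rintro x ⟨_, ⟨b, rfl⟩, a, rfl⟩
    change Filter.Tendsto (fun e : D => ι e * (ι b * a)) _ _
    have h1 := hu.tendsto_mul_right b
    have h2 := ((hιc.tendsto _).comp h1).mul_const a
    refine h2.congr fun e => ?_
    simp [mul_assoc]
  rw [Metric.tendsto_nhds]
  intro ε hε
  have ha : a ∈ closure (Submodule.span ℂ {x : A | ∃ b ∈ Set.range ι, ∃ a : A, x = b * a} : Set A) := by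
    rw [hnd]; trivial
  obtain ⟨x, hx, hxa⟩ := Metric.mem_closure_iff.mp ha (ε / 3) (by positivity)
  have hxS : Filter.Tendsto (fun e : D => ι e * x) (CStarAlgebra.approximateUnit D)
    (nhds x) := hS hx
  filter_upwards [Metric.tendsto_nhds.mp hxS (ε / 3) (by positivity), hu.eventually_norm]
    with e he he1
  rw [dist_eq_norm] at he hxa ⊢
  have he1' : ‖ι e‖ ≤ 1 := (hι e).trans_le he1
  have h1 : ι e * a - a = ι e * (a - x) + (ι e * x - x) - (a - x) := by noncomm_ring
  have h2 : ‖ι e * (a - x)‖ ≤ ‖a - x‖ :=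
    (norm_mul_le _ _).trans (mul_le_of_le_one_left (norm_nonneg _) he1')
  rw [h1]
  linarith [norm_sub_le (ι e * (a - x) + (ι e * x - x)) (a - x),
    norm_add_le (ι e * (a - x)) (ι e * x - x)]

lemma lift_state (ι : D →⋆ₙₐ[ℂ] A) (hι : ∀ d, ‖ι d‖ = ‖d‖)
    (hnd : NondegSet (Set.range ι)) (φ : D →L[ℂ] ℂ) (hφ : IsState φ) (σ : A →L[ℂ] ℂ)
    (hσ : ‖σ‖ ≤ 1) (hext : ∀ b : D, σ (ι b) = φ b) : IsState σ := by
  have hιc : Continuous ι := (AddMonoidHomClass.isometry_of_norm ι hι).continuous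
  have hu := CStarAlgebra.increasingApproximateUnit D
  have hs : ∀ᶠ e : D in CStarAlgebra.approximateUnit D, star (ι e) = ι e := by
    filter_upwards [hu.eventually_star_eq] with e he
    rw [← map_star, he]
  constructor
  · refine pos_of_tendsto_s4 (CStarAlgebra.approximateUnit D) (fun e : D => ι e) σ hσ
      (by filter_upwards [hu.eventually_norm] with e he using (hι e).trans_le he) hs ?_ ?_
    · intro a
      have h1 := (nondeg_tendsto ι hι hnd (star a)).star
      rw [star_star] at h1
      refine h1.congr' ?_
      filter_upwards [hs] with e he
      rw [star_mul, star_star, he]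
    · have h1 := state_tendsto_s4 φ hφ
      refine h1.congr fun e => (hext e).symm
  · refine le_antisymm hσ ?_
    rw [← hφ.2]
    refine φ.opNorm_le_bound (norm_nonneg _) fun b => ?_
    rw [← hext]
    rw [← hι]; exact σ.le_opNorm _

lemma ext_bound (ι : D →⋆ₙₐ[ℂ] A) (hι : ∀ d, ‖ι d‖ = ‖d‖)
    (L : TwoSidedIdeal A) (hL : IsClosed (L : Set A)) (φ : D →L[ℂ] ℂ) (hφ : IsState φ)
    (hv : ∀ b : D, ι b ∈ L → φ b = 0) (b : D) (l : A) (hl : l ∈ L) :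
    ‖φ b‖ ≤ ‖ι b - l‖ := by
  set r := ‖ι b - l‖
  have hr : 0 ≤ r := norm_nonneg _
  have hR : 0 ≤ r ^ 2 := by positivity
  set x : D := star b * b with hx
  have hx0 : 0 ≤ x := star_mul_self_nonneg b
  have hxs : IsSelfAdjoint x := hx0.isSelfAdjoint
  set f : ℝ → ℝ := fun t => max (t - r ^ 2) 0 with hf
  set g : ℝ → ℝ := fun t => min t (r ^ 2) with hg
  have hfc : ContinuousOn f (quasispectrum ℝ x) := by fun_prop
  have hgc : ContinuousOn g (quasispectrum ℝ x) := by fun_prop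
  have hf0 : f 0 = 0 := by simp [f, hr]
  have hg0 : g 0 = 0 := by simp [g, hr]
  have hxsum : x = cfcₙ g x + cfcₙ f x := by
    rw [← cfcₙ_add (a := x) g f]
    conv_lhs => rw [← cfcₙ_id' ℝ x]
    refine cfcₙ_congr fun t _ => ?_
    simp only [f, g]
    rcases le_total t (r ^ 2) with h | h
    · rw [min_eq_left h, max_eq_right (by linarith)]; ring
    · rw [min_eq_right h, max_eq_left (by linarith)]; ring
  have hm : ‖cfcₙ g x‖ ≤ r ^ 2 := by
    refine norm_cfcₙ_le fun t ht => ?_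
    have ht0 : 0 ≤ t := quasispectrum_nonneg_of_nonneg x hx0 t ht
    rw [Real.norm_of_nonneg (le_min ht0 hR)]
    exact min_le_right _ _
  set h := cfcₙ f x with hh
  have hh0 : 0 ≤ h := cfcₙ_nonneg fun t _ => le_max_right _ _
  have hhs : star h = h := hh0.isSelfAdjoint.star_eq
  have hcub : h * x * h = h * h * h + (r ^ 2) • (h * h) := by
    have e1 : h * x * h = cfcₙ (fun t => f t * t * f t) x := by
      rw [cfcₙ_mul (fun t => f t * t) f x (by fun_prop) (by simp [hf0]) hfc hf0,
        cfcₙ_mul f (fun t => t) x hfc hf0 (by fun_prop) rfl, cfcₙ_id' ℝ x]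
    have e2 : h * h * h + (r ^ 2) • (h * h) =
        cfcₙ (fun t => f t * f t * f t + (r ^ 2) • (f t * f t)) x := by
      rw [cfcₙ_add (a := x) (fun t => f t * f t * f t) (fun t => (r ^ 2) • (f t * f t)) (by fun_prop)
          (by simp [hf0]) (by fun_prop) (by simp [hf0]),
        cfcₙ_smul (r ^ 2) (fun t => f t * f t) x (by fun_prop) (by simp [hf0]),
        cfcₙ_mul (fun t => f t * f t) f x (by fun_prop) (by simp [hf0]) hfc hf0,
        cfcₙ_mul f f x hfc hf0 hfc hf0]
    rw [e1, e2]
    refine cfcₙ_congr fun t _ => ?_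
    simp only [f, smul_eq_mul]
    rcases le_total t (r ^ 2) with h | h
    · rw [max_eq_right (by linarith)]; ring
    · rw [max_eq_left (by linarith)]; ring
  obtain ⟨k, hk, hkk⟩ : ∃ k : D, star k = k ∧ k * k = h :=
    ⟨CFC.sqrt h, (CFC.sqrt_nonneg h).isSelfAdjoint.star_eq, CFC.sqrt_mul_sqrt_self h hh0⟩
  have hkA : star (ι k) = ι k := by rw [← map_star, hk]
  have hkkA : ι k * ι k = ι h := by rw [← map_mul, hkk]
  have hhsA : star (ι h) = ι h := by rw [← map_star, hhs]
  have hcubA : ι h * (star (ι b) * ι b) * ι h =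
      ι h * ι h * ι h + (r ^ 2) • (ι h * ι h) := by
    have h1 := congrArg ι hcub
    have h2 : ∀ (c : ℝ) (y : D), ι (c • y) = c • ι y := fun c y => by
      rw [← Complex.coe_smul, map_smul, Complex.coe_smul]
    simpa only [map_add, map_mul, hx, map_star, h2] using h1
  have hkh : ι k * ι h ∈ L := by
    refine aux_hered L hL _ (ι h * (star (ι b) * ι b - star (ι b - l) * (ι b - l)) * ι h)
      ?_ ?_
    · refine L.mul_mem_right _ _ (L.mul_mem_left _ _ ?_)
      have : star (ι b) * ι b - star (ι b - l) * (ι b - l)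
          = star (ι b) * l + star l * ι b - star l * l := by
        simp only [star_sub]; noncomm_ring
      rw [this]
      have hls := aux_star_mem L hL l hl
      exact L.sub_mem (L.add_mem (L.mul_mem_left _ _ hl) (L.mul_mem_right _ _ hls))
        (L.mul_mem_left _ _ hl)
    · have h1 := CStarAlgebra.star_left_conjugate_le_norm_smul (a := ι h)
        (b := star (ι b - l) * (ι b - l)) (IsSelfAdjoint.star_mul_self _)
      rw [CStarRing.norm_star_mul_self, hhsA, ← sq] at h1
      have h2 : star (ι k * ι h) * (ι k * ι h) = ι h * ι h * ι h := by
        rw [star_mul, hkA, hhsA, mul_assoc, ← mul_assoc (ι k), hkkA, mul_assoc]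
      have h3 : ι h * ι h * ι h = ι h * (star (ι b) * ι b) * ι h - (r ^ 2) • (ι h * ι h) := by
        rw [hcubA]; abel
      rw [h2, h3, mul_sub, sub_mul]
      exact sub_le_sub_left h1 _
  have hφh : φ h = 0 := by
    refine pos_zero φ hφ.1 h ?_
    rw [hhs]
    refine hv _ ?_
    have : ι (h * h) = ι k * (ι k * ι h) := by
      rw [← mul_assoc, hkkA, map_mul]
    rw [this]
    exact L.mul_mem_left _ _ hkh
  have h1 := pos_cs2 φ hφ.1 b
  rw [hφ.2, one_mul, ← hx, hxsum, map_add, hφh, add_zero] at h1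
  have h2 : ‖φ (cfcₙ g x)‖ ≤ r ^ 2 := by
    refine (φ.le_opNorm _).trans ?_
    rw [hφ.2, one_mul]; exact hm
  exact le_of_sq_le_sq (h1.trans h2) hr

lemma exists_ext (B : NonUnitalStarSubalgebra ℂ A) (hB : IsClosed (B : Set A))
    (L : TwoSidedIdeal A) (hL : IsClosed (L : Set A)) (φ : ↥B →L[ℂ] ℂ) (hφ : IsState φ)
    (hv : ∀ b : ↥B, (b : A) ∈ L → φ b = 0) :
    ∃ σ : A →L[ℂ] ℂ, ‖σ‖ ≤ 1 ∧ (∀ b : ↥B, σ (b : A) = φ b) ∧ ∀ l ∈ L, σ l = 0 := by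
  haveI := hB
  let Ls : Submodule ℂ A :=
    { carrier := L
      zero_mem' := L.zero_mem
      add_mem' := fun hx hy => L.add_mem hx hy
      smul_mem' := fun c x hx => aux_smul_mem L hL c x hx }
  let p : Seminorm ℂ A := (normSeminorm ℂ (A ⧸ Ls)).comp Ls.mkQ
  have hp : ∀ x, p x = ‖(Submodule.Quotient.mk x : A ⧸ Ls)‖ := fun x => rfl
  have hple : ∀ x, p x ≤ ‖x‖ := fun x => Submodule.Quotient.norm_mk_le Ls x
  have hpc : Continuous p := continuous_norm.comp (Submodule.continuous_mkQ Ls)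
  obtain ⟨σ, h1, h2⟩ := Module.Dual.exists_continuous_extension_of_le_seminorm
    (S := B.toNonUnitalSubalgebra.toSubmodule) (f := (φ : ↥B →ₗ[ℂ] ℂ)) hpc (by
      intro x
      refine le_of_forall_pos_lt_add fun ε hε => ?_
      obtain ⟨m, hm, hlt⟩ := Submodule.Quotient.norm_mk_lt
        (S := Ls) (Submodule.Quotient.mk (x : A) : A ⧸ Ls) hε
      rw [Submodule.Quotient.eq] at hm
      have hm' : (x : A) - m ∈ L := by
        have := L.neg_mem hm
        rwa [neg_sub] at this
      have := ext_bound (NonUnitalStarSubalgebraClass.subtype B) (fun _ => rfl) L hL φ hφ hv x _ hm'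
      change ‖φ x‖ ≤ ‖(x : A) - ((x : A) - m)‖ at this
      rw [sub_sub_cancel] at this
      exact this.trans_lt hlt)
  refine ⟨σ, σ.opNorm_le_bound zero_le_one fun x => ?_, fun b => h1 b, fun l hl => ?_⟩
  · rw [one_mul]; exact (h2 x).trans (hple x)
  · have h3 := h2 l
    rw [hp, (Submodule.Quotient.mk_eq_zero Ls).mpr hl, norm_zero] at h3
    exact norm_le_zero_iff.mp h3


end Inclusion

section Sep
attribute [local instance] CStarAlgebra.spectralOrder CStarAlgebra.spectralOrderedRing
variable {E : Type*} [NonUnitalCStarAlgebra E]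

lemma sep_dist (I : TwoSidedIdeal E) (hI : IsClosed (I : Set E)) (c : E) (hc0 : 0 ≤ c)
    (hc : c ∉ I) : ∃ δ > 0, ∀ a l : E, l ∈ I → 0 ≤ a + star a + l → δ ≤ ‖a + c‖ := by
  obtain ⟨ε, hε, hdist⟩ : ∃ ε > 0, ∀ y ∈ I, ε ≤ ‖c - y‖ := by
    have h : c ∉ closure (I : Set E) := by rwa [hI.closure_eq]
    rw [Metric.mem_closure_iff] at h
    push Not at h
    obtain ⟨ε, hε, h⟩ := h
    exact ⟨ε, hε, fun y hy => by rw [← dist_eq_norm]; exact h y hy⟩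
  refine ⟨ε / 20, by positivity, fun a l hl hal => ?_⟩
  by_contra! hlt
  set z := a + c with hz
  set z' := z + star z with hz'
  have hz'n : ‖z'‖ ≤ ε / 10 := by
    have := norm_add_le z (star z)
    rw [norm_star] at this
    linarith
  have hcs : star c = c := hc0.isSelfAdjoint.star_eq
  have hlsa : IsSelfAdjoint l := by
    have h1 : l = (a + star a + l) - (a + star a) := by abel
    rw [h1]
    exact hal.isSelfAdjoint.sub (IsSelfAdjoint.add_star_self a)
  have hle : 0 ≤ z' + l - c := by
    have h1 : z' + l - c = (a + star a + l) + c := by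
      rw [hz', hz, star_add, hcs]; abel
    rw [h1]; exact add_nonneg hal hc0
  obtain ⟨e, heI, hesa, he1, hel⟩ := aux_e I l hlsa hl (ε / 10) (by positivity)
  have h1 := aux_compress_nonneg e _ hesa hle
  have h2 := aux_compress_nonneg e c hesa hc0
  have h3 := aux_compress_norm e z' he1
  have h4 : c - e * c - c * e + e * c * e ≤
      (z' - e * z' - z' * e + e * z' * e) + (l - e * l - l * e + e * l * e) := by
    rw [← sub_nonneg]
    convert h1 using 1
    noncomm_ring
  have h5 := CStarAlgebra.norm_le_norm_of_nonneg_of_le h2 h4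
  have h6 := norm_add_le (z' - e * z' - z' * e + e * z' * e) (l - e * l - l * e + e * l * e)
  have h7 := hdist (e * c + c * e - e * c * e) (I.sub_mem (I.add_mem (I.mul_mem_right _ _ heI)
    (I.mul_mem_left _ _ heI)) (I.mul_mem_left _ _ heI))
  have h8 : c - (e * c + c * e - e * c * e) = c - e * c - c * e + e * c * e := by abel
  rw [h8] at h7
  linarith

lemma sep_pos (I : TwoSidedIdeal E) (hI : IsClosed (I : Set E)) (c : E) (hc0 : 0 ≤ c)
    (hc : c ∉ I) : ∃ f : E →L[ℂ] ℂ, ‖f‖ ≤ 1 ∧ (∀ a, 0 ≤ f (star a * a)) ∧ (∀ l ∈ I, f l = 0) ∧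
      f c ≠ 0 := by
  obtain ⟨δ, hδ, hdist⟩ := sep_dist I hI c hc0 hc
  have hsm : ∀ (t : ℝ) (x : E), x ∈ I → t • x ∈ I := fun t x hx => by
    rw [← Complex.coe_smul]; exact aux_smul_mem I hI _ _ hx
  set C : Set E := {a | ∃ l ∈ I, 0 ≤ a + star a + l} with hC
  have hCsmul : ∀ (t : ℝ) (a : E), 0 ≤ t → a ∈ C → t • a ∈ C := by
    rintro t a ht ⟨l, hl, h⟩
    refine ⟨t • l, hsm _ _ hl, ?_⟩
    have := smul_nonneg ht h
    simpa [smul_add] using this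
  have hCadd : ∀ a b : E, a ∈ C → b ∈ C → a + b ∈ C := by
    rintro a b ⟨l, hl, h⟩ ⟨m, hm, h'⟩
    refine ⟨l + m, I.add_mem hl hm, ?_⟩
    have h1 : a + b + star (a + b) + (l + m) = (a + star a + l) + (b + star b + m) := by
      rw [star_add]; abel
    rw [h1]; exact add_nonneg h h'
  have hCconv : Convex ℝ C := fun x hx y hy s t hs ht _ =>
    hCadd _ _ (hCsmul s x hs hx) (hCsmul t y ht hy)
  have hdisj : Disjoint (Metric.ball (-c) δ) C := by
    rw [Set.disjoint_left]
    rintro a ha ⟨l, hl, h⟩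
    have h1 := hdist a l hl h
    rw [mem_ball_iff_norm, sub_neg_eq_add] at ha
    linarith
  obtain ⟨f, u, hf1, hf2⟩ := RCLike.geometric_hahn_banach_open (𝕜 := ℂ)
    (convex_ball (-c) δ) Metric.isOpen_ball hCconv hdisj
  simp only [RCLike.re_to_complex] at hf1 hf2
  have h0C : (0 : E) ∈ C := ⟨0, I.zero_mem, by simp⟩
  have hu : u ≤ 0 := by simpa using hf2 0 h0C
  have hfr : ∀ (t : ℝ) (x : E), (f (t • x)).re = t * (f x).re := fun t x => by
    rw [← Complex.coe_smul, map_smul]; simp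
  have hfC : ∀ b ∈ C, 0 ≤ (f b).re := by
    intro b hb
    by_contra! hlt
    have h1 := hf2 _ (hCsmul ((u - 1) / (f b).re) b
      (div_nonneg_of_nonpos (by linarith) hlt.le) hb)
    rw [hfr, div_mul_cancel₀ _ hlt.ne] at h1
    linarith
  have hfc : 0 < (f c).re := by
    have := hf1 (-c) (Metric.mem_ball_self hδ)
    rw [map_neg, Complex.neg_re] at this
    linarith
  have hskew : ∀ a : E, a + star a = 0 → (f a).re = 0 := by
    intro a ha
    have h1 := hfC a ⟨0, I.zero_mem, by simp [ha]⟩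
    have h2 := hfC (-a) ⟨0, I.zero_mem, by
      have : -a + star (-a) + 0 = -(a + star a) := by rw [star_neg]; abel
      rw [this, ha]; simp⟩
    rw [map_neg, Complex.neg_re] at h2
    linarith
  have him : ∀ h : E, IsSelfAdjoint h → (f h).im = 0 := by
    intro h hh
    have h1 := hskew (Complex.I • h) (by rw [star_smul, hh.star_eq]; simp)
    rw [map_smul] at h1
    simpa using h1
  have hpos : ∀ a : E, 0 ≤ f (star a * a) := by
    intro a
    rw [Complex.nonneg_iff]
    refine ⟨hfC _ ⟨0, I.zero_mem, ?_⟩, (him _ (IsSelfAdjoint.star_mul_self a)).symm⟩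
    rw [(IsSelfAdjoint.star_mul_self a).star_eq, add_zero]
    exact add_nonneg (star_mul_self_nonneg a) (star_mul_self_nonneg a)
  have hvan : ∀ l ∈ I, f l = 0 := by
    intro l hl
    refine pos_zero f hpos l ?_
    have hx : star l * l ∈ I := I.mul_mem_left _ _ hl
    have h1 := hfC (-(star l * l)) ⟨star l * l + star l * l, I.add_mem hx hx, by
      rw [star_neg, (IsSelfAdjoint.star_mul_self l).star_eq]
      have : -(star l * l) + -(star l * l) + (star l * l + star l * l) = 0 := by abel
      rw [this]⟩
    rw [map_neg, Complex.neg_re] at h1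
    have h2 := Complex.nonneg_iff.mp (hpos l)
    exact Complex.ext (by simp; linarith) (by simp [← h2.2])
  have hn : 0 < ‖f‖ + 1 := by positivity
  refine ⟨((‖f‖ + 1)⁻¹ : ℝ) • f, ?_, ?_, ?_, ?_⟩
  · rw [norm_smul, Real.norm_of_nonneg (by positivity), inv_mul_le_iff₀ hn]
    linarith
  · intro a
    exact smul_nonneg (α := ℝ) (a := (‖f‖ + 1)⁻¹) (by positivity) (hpos a)
  · intro l hl
    change (‖f‖ + 1)⁻¹ • f l = 0
    rw [hvan l hl, smul_zero]
  · change (‖f‖ + 1)⁻¹ • f c ≠ 0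
    refine smul_ne_zero (by positivity) fun h => ?_
    rw [h] at hfc; simp at hfc

/-- summands of a convex combination of positive functionals vanish where the combination does -/
lemma seg_zero (φ σ₁ σ₂ : E →L[ℂ] ℂ) (h1 : ∀ a, 0 ≤ σ₁ (star a * a))
    (h2 : ∀ a, 0 ≤ σ₂ (star a * a)) (hs : φ ∈ openSegment ℝ σ₁ σ₂) (l : E)
    (h : φ (star l * l) = 0) : σ₁ l = 0 ∧ σ₂ l = 0 := by
  obtain ⟨s, t, hs, ht, -, rfl⟩ := hs
  change s • σ₁ (star l * l) + t • σ₂ (star l * l) = 0 at h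
  have h1' := smul_nonneg hs.le (h1 l)
  have h2' := smul_nonneg ht.le (h2 l)
  rw [add_eq_zero_iff_of_nonneg h1' h2'] at h
  exact ⟨pos_zero σ₁ h1 l ((smul_eq_zero_iff_right hs.ne').mp h.1),
    pos_zero σ₂ h2 l ((smul_eq_zero_iff_right ht.ne').mp h.2)⟩

lemma wk_closed_eq (x : E) (K : Set ℂ) (hK : IsClosed K) :
    IsClosed {φ : WeakDual ℂ E | WeakDual.toStrongDual φ x ∈ K} :=
  hK.preimage (WeakDual.eval_continuous x)

lemma wk_closed_ball :
    IsClosed {φ : WeakDual ℂ E | ‖WeakDual.toStrongDual φ‖ ≤ 1} := by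
  have h := (WeakDual.isCompact_closedBall (𝕜 := ℂ) (0 : StrongDual ℂ E) 1).isClosed
  convert h using 1
  ext φ
  simp

lemma sep_pure (I : TwoSidedIdeal E) (hI : IsClosed (I : Set E)) (c : E) (hc0 : 0 ≤ c)
    (hc : c ∉ I) : ∃ φ : E →L[ℂ] ℂ, IsPureState φ ∧ (∀ l ∈ I, φ l = 0) ∧ φ c ≠ 0 := by
  obtain ⟨f, hfn, hfp, hfI, hfc⟩ := sep_pos I hI c hc0 hc
  set Q : Set (E →L[ℂ] ℂ) :=
    {f | ‖f‖ ≤ 1 ∧ (∀ a, 0 ≤ f (star a * a)) ∧ ∀ l ∈ I, f l = 0} with hQ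
  have hconv : Convex ℝ Q := by
    rintro x ⟨hx1, hx2, hx3⟩ y ⟨hy1, hy2, hy3⟩ s t hs ht hst
    refine ⟨?_, fun a => ?_, fun l hl => ?_⟩
    · calc ‖s • x + t • y‖ ≤ s * ‖x‖ + t * ‖y‖ := by
            refine (norm_add_le _ _).trans_eq ?_
            rw [norm_smul, norm_smul, Real.norm_of_nonneg hs, Real.norm_of_nonneg ht]
        _ ≤ s * 1 + t * 1 := by gcongr
        _ = 1 := by linarith
    · exact add_nonneg (smul_nonneg hs (hx2 a)) (smul_nonneg ht (hy2 a))
    · change s • x l + t • y l = 0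
      rw [hx3 l hl, hy3 l hl]; simp
  have hcl : IsClosed {φ : WeakDual ℂ E | WeakDual.toStrongDual φ ∈ Q} := by
    simp only [hQ, Set.ofPred_and, Set.ofPred_forall]
    refine wk_closed_ball.inter (IsClosed.inter (isClosed_iInter fun a => ?_)
      (isClosed_iInter fun l => isClosed_iInter fun _ => ?_))
    · exact wk_closed_eq _ (Set.Ici 0) isClosed_Ici
    · exact wk_closed_eq _ {0} isClosed_singleton
  obtain ⟨φ, hφ, hφc⟩ := km_extreme Q hconv (fun φ h => h.1) hcl f ⟨hfn, hfp, hfI⟩ c hfc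
  have hφ0 : φ ≠ 0 := fun h => hφc (by rw [h]; rfl)
  have hnpos : 0 < ‖φ‖ := norm_pos_iff.mpr hφ0
  have hφ1 : ‖φ‖ = 1 := by
    by_contra hne
    have hlt : ‖φ‖ < 1 := lt_of_le_of_ne hφ.1.1 hne
    have h1 : ‖φ‖⁻¹ • φ ∈ Q := by
      refine ⟨?_, fun a => ?_, fun l hl => ?_⟩
      · rw [norm_smul, norm_inv, norm_norm, inv_mul_cancel₀ hnpos.ne']
      · exact smul_nonneg (α := ℝ) (a := ‖φ‖⁻¹) (by positivity) (hφ.1.2.1 a)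
      · change ‖φ‖⁻¹ • φ l = 0
        rw [hφ.1.2.2 l hl, smul_zero]
    have h0 : (0 : E →L[ℂ] ℂ) ∈ Q := ⟨by simp, fun a => by simp, fun l _ => by simp⟩
    have h2 := hφ.2 h0 h1 ⟨1 - ‖φ‖, ‖φ‖, by linarith, hnpos, by ring, by
      ext x
      change (1 - ‖φ‖) • (0 : ℂ) + ‖φ‖ • ‖φ‖⁻¹ • φ x = φ x
      rw [smul_zero, zero_add, smul_smul, mul_inv_cancel₀ hnpos.ne', one_smul]⟩
    exact hφ0 h2.symm
  refine ⟨φ, ⟨⟨hφ.1.2.1, hφ1⟩, ?_⟩, hφ.1.2.2, hφc⟩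
  rintro x ⟨hx1, hx2⟩ y ⟨hy1, hy2⟩ hxy
  have hz := fun l (hl : l ∈ I) => seg_zero φ x y hx1 hy1 hxy l
    (hφ.1.2.2 _ (I.mul_mem_left _ _ hl))
  exact hφ.2 ⟨hx2.le, hx1, fun l hl => (hz l hl).1⟩ ⟨hy2.le, hy1, fun l hl => (hz l hl).2⟩ hxy

end Sep

section Main
variable {A : Type*} [NonUnitalCStarAlgebra A]

section
attribute [local instance] CStarAlgebra.spectralOrder CStarAlgebra.spectralOrderedRing

lemma sep_pure' (I : TwoSidedIdeal A) (hI : IsClosed (I : Set A)) (s : A)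
    (hc : star s * s ∉ I) :
    ∃ φ : A →L[ℂ] ℂ, IsPureState φ ∧ (∀ l ∈ I, φ l = 0) ∧ φ (star s * s) ≠ 0 :=
  sep_pure I hI _ (star_mul_self_nonneg s) hc

lemma mem_of_star_mul_self (L : TwoSidedIdeal A) (hL : IsClosed (L : Set A)) (s : A)
    (h : star s * s ∈ L) : s ∈ L := aux_hered L hL s _ h le_rfl

end

/-- restriction of a functional to a subalgebra -/
noncomputable def restr (B : NonUnitalStarSubalgebra ℂ A) (σ : A →L[ℂ] ℂ) : ↥B →L[ℂ] ℂ where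
  toFun b := σ (b : A)
  map_add' x y := map_add σ _ _
  map_smul' c x := map_smul σ c _
  cont := σ.continuous.comp continuous_subtype_val

lemma restr_norm (B : NonUnitalStarSubalgebra ℂ A) (σ : A →L[ℂ] ℂ) : ‖restr B σ‖ ≤ ‖σ‖ :=
  ContinuousLinearMap.opNorm_le_bound _ (norm_nonneg _) fun b => σ.le_opNorm (b : A)

lemma range_sub (B : NonUnitalStarSubalgebra ℂ A) (hnd : NondegSet (B : Set A)) :
    NondegSet (Set.range (NonUnitalStarSubalgebraClass.subtype B)) := by
  have : Set.range (NonUnitalStarSubalgebraClass.subtype B) = (B : Set A) := by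
    ext x
    constructor
    · rintro ⟨b, rfl⟩; exact b.2
    · intro hx; exact ⟨⟨x, hx⟩, rfl⟩
  rwa [this]

lemma lift_state' (B : NonUnitalStarSubalgebra ℂ A) (hB : IsClosed (B : Set A))
    (hnd : NondegSet (B : Set A)) (φ : ↥B →L[ℂ] ℂ) (hφ : IsState φ) (σ : A →L[ℂ] ℂ)
    (hσ : ‖σ‖ ≤ 1) (hext : ∀ b : ↥B, σ (b : A) = φ b) : IsState σ := by
  have := hB
  exact lift_state (NonUnitalStarSubalgebraClass.subtype B) (fun _ => rfl) (range_sub B hnd)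
    φ hφ σ hσ hext

lemma exists_pure_ext (B : NonUnitalStarSubalgebra ℂ A) (hB : IsClosed (B : Set A))
    (hnd : NondegSet (B : Set A))
    (L : TwoSidedIdeal A) (hL : IsClosed (L : Set A)) (φ : ↥B →L[ℂ] ℂ) (hφ : IsPureState φ)
    (hv : ∀ b : ↥B, (b : A) ∈ L → φ b = 0) :
    ∃ σ : A →L[ℂ] ℂ, IsPureState σ ∧ (∀ b : ↥B, σ (b : A) = φ b) ∧ ∀ l ∈ L, σ l = 0 := by
  obtain ⟨σ₀, h1, h2, h3⟩ := exists_ext B hB L hL φ hφ.1 hv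
  obtain ⟨b₀, hb₀⟩ : ∃ b, φ b ≠ 0 := by
    by_contra! hcon
    have h : φ = 0 := by ext b; exact hcon b
    have h' : ‖φ‖ = 1 := hφ.1.2
    rw [h, norm_zero] at h'
    exact zero_ne_one h'
  set Q : Set (A →L[ℂ] ℂ) :=
    {f | ‖f‖ ≤ 1 ∧ (∀ b : ↥B, f (b : A) = φ b) ∧ ∀ l ∈ L, f l = 0} with hQ
  have hconv : Convex ℝ Q := by
    rintro x ⟨hx1, hx2, hx3⟩ y ⟨hy1, hy2, hy3⟩ s t hs ht hst
    refine ⟨?_, fun b => ?_, fun l hl => ?_⟩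
    · calc ‖s • x + t • y‖ ≤ s * ‖x‖ + t * ‖y‖ := by
            refine (norm_add_le _ _).trans_eq ?_
            rw [norm_smul, norm_smul, Real.norm_of_nonneg hs, Real.norm_of_nonneg ht]
        _ ≤ s * 1 + t * 1 := by gcongr
        _ = 1 := by linarith
    · change s • x b + t • y b = φ b
      rw [hx2, hy2, ← add_smul, hst, one_smul]
    · change s • x l + t • y l = 0
      rw [hx3 l hl, hy3 l hl]; simp
  have hcl : IsClosed {φ : WeakDual ℂ A | WeakDual.toStrongDual φ ∈ Q} := by
    simp only [hQ, Set.ofPred_and, Set.ofPred_forall]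
    refine wk_closed_ball.inter (IsClosed.inter (isClosed_iInter fun a => ?_)
      (isClosed_iInter fun l => isClosed_iInter fun _ => ?_))
    · exact wk_closed_eq _ {φ a} isClosed_singleton
    · exact wk_closed_eq _ {0} isClosed_singleton
  obtain ⟨σ, hσ, -⟩ := km_extreme Q hconv (fun φ h => h.1) hcl σ₀ ⟨h1, h2, h3⟩ (b₀ : A)
    (by rw [h2]; exact hb₀)
  refine ⟨σ, ⟨lift_state' B hB hnd φ hφ.1 σ hσ.1.1 hσ.1.2.1, ?_⟩, hσ.1.2.1, hσ.1.2.2⟩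
  rintro x ⟨hx1, hx2⟩ y ⟨hy1, hy2⟩ hxy
  have hz := fun l (hl : l ∈ L) => seg_zero σ x y hx1 hy1 hxy l
    (hσ.1.2.2 _ (L.mul_mem_left _ _ hl))
  have hseg : φ ∈ openSegment ℝ (restr B x) (restr B y) := by
    obtain ⟨s, t, hs, ht, hst, h⟩ := hxy
    refine ⟨s, t, hs, ht, hst, ?_⟩
    ext b
    rw [← hσ.1.2.1 b, ← h]
    rfl
  have hxn : ‖restr B x‖ ≤ 1 := (restr_norm B x).trans_eq hx2
  have hyn : ‖restr B y‖ ≤ 1 := (restr_norm B y).trans_eq hy2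
  have hnorm : ‖restr B x‖ = 1 ∧ ‖restr B y‖ = 1 := by
    obtain ⟨s, t, hs, ht, hst, h⟩ := hseg
    have h' : ‖φ‖ = 1 := hφ.1.2
    have hle : 1 ≤ s * ‖restr B x‖ + t * ‖restr B y‖ := by
      rw [← h', ← h]
      refine (norm_add_le _ _).trans_eq ?_
      rw [norm_smul, norm_smul, Real.norm_of_nonneg hs.le, Real.norm_of_nonneg ht.le]
    constructor <;> nlinarith
  have hxs : IsState (restr B x) := ⟨fun a => hx1 (a : A), hnorm.1⟩
  have hys : IsState (restr B y) := ⟨fun a => hy1 (a : A), hnorm.2⟩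
  have hxe : restr B x = φ := hφ.2 hxs hys hseg
  have hye : restr B y = φ := hφ.2 hys hxs (by rwa [openSegment_symm])
  exact hσ.2 ⟨hx2.le, fun b => by rw [← hxe]; rfl, fun l hl => (hz l hl).1⟩
    ⟨hy2.le, fun b => by rw [← hye]; rfl, fun l hl => (hz l hl).2⟩ hxy

lemma exists_pure_sub (B : NonUnitalStarSubalgebra ℂ A) (hB : IsClosed (B : Set A))
    (J : TwoSidedIdeal A) (hJ : IsClosed (J : Set A)) (b : ↥B) (hb : (b : A) ∉ J) :
    ∃ φ : ↥B →L[ℂ] ℂ, IsPureState φ ∧ (∀ l : ↥B, (l : A) ∈ J → φ l = 0) ∧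
      φ (star b * b * (star b * b)) ≠ 0 := by
  have := hB
  set I : TwoSidedIdeal ↥B := TwoSidedIdeal.comap (NonUnitalStarSubalgebraClass.subtype B) J
  have hmem : ∀ l : ↥B, l ∈ I ↔ (l : A) ∈ J := fun l => TwoSidedIdeal.mem_comap _
  have hI : IsClosed (I : Set ↥B) := by
    have h1 : (I : Set ↥B) = (fun x : ↥B => (x : A)) ⁻¹' (J : Set A) := by
      ext l; exact hmem l
    rw [h1]
    exact hJ.preimage continuous_subtype_val
  obtain ⟨φ, h1, h2, h3⟩ := sep_pure' I hI (star b * b) (by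
    rw [hmem]
    intro h
    exact hb (mem_of_star_mul_self J hJ _ (mem_of_star_mul_self J hJ (star (b : A) * b) h)))
  refine ⟨φ, h1, fun l hl => h2 l ((hmem l).mpr hl), ?_⟩
  simpa using h3

lemma state_K_ne (σ : A →L[ℂ] ℂ) (hσ : IsState σ) : Kset ⇑σ ≠ Set.univ := by
  intro h
  have hK : ∀ a x y : A, σ (x * a * y) = 0 := fun a => by
    have : a ∈ Kset ⇑σ := by rw [h]; trivial
    exact this
  have h0 : σ = 0 := by
    ext a
    refine pos_zero σ hσ.1 a (pos_zero σ hσ.1 _ ?_)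
    have := hK a (star a) (star a * a)
    simpa using this
  have h' := hσ.2
  rw [h0, norm_zero] at h'
  exact zero_ne_one h'

/-- The intersection of the kernels as a two-sided ideal. -/
def Kideal {T : Type*} (Φ : Set T) (σ : T → (A →L[ℂ] ℂ)) : TwoSidedIdeal A :=
  TwoSidedIdeal.mk' (⋂ φ ∈ Φ, Kset ⇑(σ φ))
    (by simp [Kset])
    (by
      intro x y hx hy
      simp only [Set.mem_iInter] at hx hy ⊢
      intro φ hφ u v
      rw [mul_add, add_mul, map_add, hx φ hφ u v, hy φ hφ u v, add_zero])
    (by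
      intro x hx
      simp only [Set.mem_iInter] at hx ⊢
      intro φ hφ u v
      rw [mul_neg, neg_mul, map_neg, hx φ hφ u v, neg_zero])
    (by
      intro x y hy
      simp only [Set.mem_iInter] at hy ⊢
      intro φ hφ u v
      rw [← mul_assoc]
      exact hy φ hφ (u * x) v)
    (by
      intro x y hx
      simp only [Set.mem_iInter] at hx ⊢
      intro φ hφ u v
      rw [← mul_assoc, mul_assoc (u * x)]
      exact hx φ hφ u (y * v))

lemma coe_Kideal {T : Type*} (Φ : Set T) (σ : T → (A →L[ℂ] ℂ)) :
    (Kideal Φ σ : Set A) = ⋂ φ ∈ Φ, Kset ⇑(σ φ) := by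
  ext x
  exact TwoSidedIdeal.mem_mk' _ _ _ _ _ _ _

lemma Kideal_closed {T : Type*} (Φ : Set T) (σ : T → (A →L[ℂ] ℂ)) :
    IsClosed (Kideal Φ σ : Set A) := by
  rw [coe_Kideal]
  refine isClosed_biInter fun φ _ => ?_
  simp only [Kset, Set.ofPred_forall]
  exact isClosed_iInter fun x => isClosed_iInter fun y =>
    isClosed_eq (by fun_prop) continuous_const

lemma not_sub (B : NonUnitalStarSubalgebra ℂ A) (hnd : NondegSet (B : Set A))
    (J : TwoSidedIdeal A) (hJ : IsClosed (J : Set A)) (hJproper : (J : Set A) ≠ Set.univ) :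
    ∃ b : ↥B, (b : A) ∉ J := by
  by_contra! hcon
  apply hJproper
  let Ls : Submodule ℂ A :=
    { carrier := J
      zero_mem' := J.zero_mem
      add_mem' := fun hx hy => J.add_mem hx hy
      smul_mem' := fun c x hx => aux_smul_mem J hJ c x hx }
  have h1 : Submodule.span ℂ {x : A | ∃ b ∈ (B : Set A), ∃ a : A, x = b * a} ≤ Ls := by
    rw [Submodule.span_le]
    rintro x ⟨b, hb, a, rfl⟩
    exact J.mul_mem_right _ _ (hcon ⟨b, hb⟩)
  have h2 := closure_minimal (s := (Submodule.span ℂ {x : A | ∃ b ∈ (B : Set A), ∃ a : A,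
    x = b * a} : Set A)) h1 hJ
  rw [hnd] at h2
  exact Set.univ_subset_iff.mp h2

lemma sub_K (L : TwoSidedIdeal A) (σ : A →L[ℂ] ℂ) (h : ∀ l ∈ L, σ l = 0) :
    (L : Set A) ⊆ Kset ⇑σ := fun _ ha _ _ =>
  h _ (L.mul_mem_right _ _ (L.mul_mem_left _ _ ha))

end Main

/-- **Relative Dominance Theorem.** For a non-degenerate `C*`-inclusion `B ⊆ A`
and a proper closed two-sided ideal `J ⊴ A`, the following are equivalent:
(i) `J` is dominant relative to `B`;
(ii) some set `Φ` of states of `B` vanishing on `B ∩ J` has all its `A`-lifts subordinated to `J`;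
(iii) the same with `Φ` consisting of pure states;
(iii') the same with `Φ` pure, quantifying only over pure `A`-lifts. -/
theorem stmt4 {A : Type*} [NonUnitalCStarAlgebra A]
    (B : NonUnitalStarSubalgebra ℂ A) (hBclosed : IsClosed (B : Set A))
    (hnd : NondegSet (B : Set A))
    (J : TwoSidedIdeal A) (hJclosed : IsClosed (J : Set A)) (hJproper : (J : Set A) ≠ Set.univ) :
    ((∀ L : TwoSidedIdeal A, IsClosed (L : Set A) → (L : Set A) ≠ Set.univ →
        (B : Set A) ∩ (L : Set A) ⊆ (B : Set A) ∩ (J : Set A) → (L : Set A) ⊆ (J : Set A)) ↔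
      (∃ Φ : Set (↥B →L[ℂ] ℂ),
        (∀ φ ∈ Φ, IsState φ ∧ ∀ b : ↥B, (b : A) ∈ J → φ b = 0) ∧
        ∀ σ : (↥B →L[ℂ] ℂ) → (A →L[ℂ] ℂ),
          (∀ φ ∈ Φ, IsState (σ φ) ∧ ∀ b : ↥B, σ φ (b : A) = φ b) →
          (⋂ φ ∈ Φ, Kset ⇑(σ φ)) ⊆ (J : Set A))) ∧
    ((∀ L : TwoSidedIdeal A, IsClosed (L : Set A) → (L : Set A) ≠ Set.univ →
        (B : Set A) ∩ (L : Set A) ⊆ (B : Set A) ∩ (J : Set A) → (L : Set A) ⊆ (J : Set A)) ↔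
      (∃ Φ : Set (↥B →L[ℂ] ℂ),
        (∀ φ ∈ Φ, IsPureState φ ∧ ∀ b : ↥B, (b : A) ∈ J → φ b = 0) ∧
        ∀ σ : (↥B →L[ℂ] ℂ) → (A →L[ℂ] ℂ),
          (∀ φ ∈ Φ, IsState (σ φ) ∧ ∀ b : ↥B, σ φ (b : A) = φ b) →
          (⋂ φ ∈ Φ, Kset ⇑(σ φ)) ⊆ (J : Set A))) ∧
    ((∀ L : TwoSidedIdeal A, IsClosed (L : Set A) → (L : Set A) ≠ Set.univ →
        (B : Set A) ∩ (L : Set A) ⊆ (B : Set A) ∩ (J : Set A) → (L : Set A) ⊆ (J : Set A)) ↔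
      (∃ Φ : Set (↥B →L[ℂ] ℂ),
        (∀ φ ∈ Φ, IsPureState φ ∧ ∀ b : ↥B, (b : A) ∈ J → φ b = 0) ∧
        ∀ σ : (↥B →L[ℂ] ℂ) → (A →L[ℂ] ℂ),
          (∀ φ ∈ Φ, IsPureState (σ φ) ∧ ∀ b : ↥B, σ φ (b : A) = φ b) →
          (⋂ φ ∈ Φ, Kset ⇑(σ φ)) ⊆ (J : Set A))) := by
  have h13 : ∀ (_ : ∀ L : TwoSidedIdeal A, IsClosed (L : Set A) → (L : Set A) ≠ Set.univ →
        (B : Set A) ∩ (L : Set A) ⊆ (B : Set A) ∩ (J : Set A) → (L : Set A) ⊆ (J : Set A)),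
      (∃ Φ : Set (↥B →L[ℂ] ℂ),
        (∀ φ ∈ Φ, IsPureState φ ∧ ∀ b : ↥B, (b : A) ∈ J → φ b = 0) ∧
        ∀ σ : (↥B →L[ℂ] ℂ) → (A →L[ℂ] ℂ),
          (∀ φ ∈ Φ, IsState (σ φ) ∧ ∀ b : ↥B, σ φ (b : A) = φ b) →
          (⋂ φ ∈ Φ, Kset ⇑(σ φ)) ⊆ (J : Set A)) := by
    intro hdom
    refine ⟨{φ | IsPureState φ ∧ ∀ b : ↥B, (b : A) ∈ J → φ b = 0}, fun φ h => h, ?_⟩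
    intro σ hσ
    rw [← coe_Kideal]
    refine hdom _ (Kideal_closed _ _) ?_ ?_
    · obtain ⟨b, hb⟩ := not_sub B hnd J hJclosed hJproper
      obtain ⟨φ, h1, h2, -⟩ := exists_pure_sub B hBclosed J hJclosed b hb
      intro huniv
      rw [coe_Kideal] at huniv
      refine state_K_ne (σ φ) (hσ φ ⟨h1, h2⟩).1 (Set.univ_subset_iff.mp ?_)
      rw [← huniv]
      exact Set.biInter_subset_of_mem (show φ ∈ {φ : ↥B →L[ℂ] ℂ | IsPureState φ ∧
        ∀ b : ↥B, (b : A) ∈ J → φ b = 0} from ⟨h1, h2⟩)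
    · rintro b ⟨hbB, hbK⟩
      refine ⟨hbB, ?_⟩
      by_contra hbJ
      obtain ⟨φ, h1, h2, h3⟩ := exists_pure_sub B hBclosed J hJclosed ⟨b, hbB⟩ hbJ
      rw [coe_Kideal] at hbK
      have hk : b ∈ Kset ⇑(σ φ) := Set.mem_iInter₂.mp hbK φ ⟨h1, h2⟩
      apply h3
      rw [← (hσ φ ⟨h1, h2⟩).2]
      exact hk (star b) (star b * b)
  have h21 : (∃ Φ : Set (↥B →L[ℂ] ℂ),
        (∀ φ ∈ Φ, IsState φ ∧ ∀ b : ↥B, (b : A) ∈ J → φ b = 0) ∧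
        ∀ σ : (↥B →L[ℂ] ℂ) → (A →L[ℂ] ℂ),
          (∀ φ ∈ Φ, IsState (σ φ) ∧ ∀ b : ↥B, σ φ (b : A) = φ b) →
          (⋂ φ ∈ Φ, Kset ⇑(σ φ)) ⊆ (J : Set A)) →
      (∀ L : TwoSidedIdeal A, IsClosed (L : Set A) → (L : Set A) ≠ Set.univ →
        (B : Set A) ∩ (L : Set A) ⊆ (B : Set A) ∩ (J : Set A) → (L : Set A) ⊆ (J : Set A)) := by
    rintro ⟨Φ, hΦ, hsub⟩ L hL - hBL
    have hex : ∀ φ ∈ Φ, ∃ σ : A →L[ℂ] ℂ, ‖σ‖ ≤ 1 ∧ (∀ b : ↥B, σ (b : A) = φ b) ∧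
        ∀ l ∈ L, σ l = 0 := fun φ hφ =>
      exists_ext B hBclosed L hL φ (hΦ φ hφ).1
        fun b hb => (hΦ φ hφ).2 b (hBL ⟨b.2, hb⟩).2
    choose! σ hσ using hex
    refine (Set.subset_iInter₂ fun φ hφ => sub_K L _ (hσ φ hφ).2.2).trans (hsub σ fun φ hφ => ?_)
    exact ⟨lift_state' B hBclosed hnd φ (hΦ φ hφ).1 _ (hσ φ hφ).1 (hσ φ hφ).2.1, (hσ φ hφ).2.1⟩
  have h41 : (∃ Φ : Set (↥B →L[ℂ] ℂ),
        (∀ φ ∈ Φ, IsPureState φ ∧ ∀ b : ↥B, (b : A) ∈ J → φ b = 0) ∧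
        ∀ σ : (↥B →L[ℂ] ℂ) → (A →L[ℂ] ℂ),
          (∀ φ ∈ Φ, IsPureState (σ φ) ∧ ∀ b : ↥B, σ φ (b : A) = φ b) →
          (⋂ φ ∈ Φ, Kset ⇑(σ φ)) ⊆ (J : Set A)) →
      (∀ L : TwoSidedIdeal A, IsClosed (L : Set A) → (L : Set A) ≠ Set.univ →
        (B : Set A) ∩ (L : Set A) ⊆ (B : Set A) ∩ (J : Set A) → (L : Set A) ⊆ (J : Set A)) := by
    rintro ⟨Φ, hΦ, hsub⟩ L hL - hBL
    have hex : ∀ φ ∈ Φ, ∃ σ : A →L[ℂ] ℂ, IsPureState σ ∧ (∀ b : ↥B, σ (b : A) = φ b) ∧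
        ∀ l ∈ L, σ l = 0 := fun φ hφ =>
      exists_pure_ext B hBclosed hnd L hL φ (hΦ φ hφ).1
        fun b hb => (hΦ φ hφ).2 b (hBL ⟨b.2, hb⟩).2
    choose! σ hσ using hex
    refine (Set.subset_iInter₂ fun φ hφ => sub_K L _ (hσ φ hφ).2.2).trans (hsub σ fun φ hφ => ?_)
    exact ⟨(hσ φ hφ).1, (hσ φ hφ).2.1⟩
  refine ⟨⟨fun h => ?_, h21⟩, ⟨h13, ?_⟩, ⟨fun h => ?_, h41⟩⟩
  · obtain ⟨Φ, h1, h2⟩ := h13 h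
    exact ⟨Φ, fun φ hφ => ⟨(h1 φ hφ).1.1, (h1 φ hφ).2⟩, h2⟩
  · rintro ⟨Φ, h1, h2⟩
    exact h21 ⟨Φ, fun φ hφ => ⟨(h1 φ hφ).1.1, (h1 φ hφ).2⟩, h2⟩
  · obtain ⟨Φ, h1, h2⟩ := h13 h
    exact ⟨Φ, h1, fun σ hσ => h2 σ fun φ hφ => ⟨(hσ φ hφ).1.1, (hσ φ hφ).2⟩⟩
end

section
/- Let C₀(Q) ⊆ A be a central non-degenerate inclusion, E : A → C₀(Q) an essentially faithful conditional expectation, and q₀ ∈ Q. The following are equivalent: (i) for every a ∈ A, the function q ↦ p^E_q(a) is continuous at q₀; (i') there is a dense subset A₀ ⊆ A such that q ↦ p^E_q(a) is continuous at q₀ for every a ∈ A₀; (i'') there is a dense subset A₀ ⊆ A such that limsup_{q→q₀} p^E_q(a) ≤ p^E_{q₀}(a) for every a ∈ A₀; (ii) p^unif_{q₀}(a) = p^E_{q₀}(a) for every a ∈ A; (ii') there is a dense subset A₀ ⊆ A such that p^unif_{q₀}(a) = p^E_{q₀}(a) for every a ∈ A₀. -/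
open scoped ComplexOrder
open ZeroAtInfty

/-- The seminorm `p^E_q` from the GNS representation of the state `ev_q ∘ E`:
`p^E_q(a)² = sup { (ev_q∘E)(x* a* a x) / (ev_q∘E)(x* x) : (ev_q∘E)(x* x) > 0 }`
(with value `0` when the set is empty). -/
noncomputable def pE {Q : Type*} [TopologicalSpace Q]
    {A : Type*} [NonUnitalCStarAlgebra A]
    (E : A →L[ℂ] C₀(Q, ℂ)) (q : Q) (a : A) : ℝ :=
  Real.sqrt (sSup {r : ℝ | ∃ x : A, 0 < (E (star x * x) q).re ∧
    r = (E (star x * (star a * a) * x) q).re / (E (star x * x) q).re})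

/-- `p^unif_q(a) = inf {‖f a‖ : f ∈ C₀(Q), 0 ≤ f ≤ 1, f q = 1}`, the quotient seminorm of
`A / J^unif_q`. -/
noncomputable def punif {Q : Type*} [TopologicalSpace Q] [LocallyCompactSpace Q] [T2Space Q]
    {A : Type*} [NonUnitalCStarAlgebra A]
    (ι : C₀(Q, ℂ) →⋆ₙₐ[ℂ] A) (q : Q) (a : A) : ℝ :=
  sInf {r : ℝ | ∃ f : C₀(Q, ℂ), (∀ x : Q, 0 ≤ f x ∧ f x ≤ 1) ∧ f q = 1 ∧ r = ‖ι f * a‖}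

section Helpers

variable {Q : Type*} [TopologicalSpace Q]
    {A : Type*} [NonUnitalCStarAlgebra A] [PartialOrder A] [StarOrderedRing A]

/-- Monotonicity and bound for the functional `Re (ev_q ∘ E)`. -/
lemma helper_bound (E : A →L[ℂ] C₀(Q, ℂ)) (hEpos : ∀ a : A, 0 ≤ a → ∀ q : Q, 0 ≤ E a q)
    (q : Q) (b x : A) (hb : IsSelfAdjoint b) :
    (E (star x * b * x) q).re ≤ ‖b‖ * (E (star x * x) q).re := by
  have h := CStarAlgebra.star_left_conjugate_le_norm_smul (a := x) (b := b) hb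
  have h2 := hEpos _ (sub_nonneg.2 h) q
  have h3 := (Complex.le_def.1 h2).1
  have h4 : ‖b‖ • (star x * x) = ((‖b‖ : ℝ) : ℂ) • (star x * x) := (Complex.coe_smul _ _).symm
  rw [h4, map_sub, map_smul] at h3
  simpa using h3

lemma helper_nonneg (E : A →L[ℂ] C₀(Q, ℂ)) (hEpos : ∀ a : A, 0 ≤ a → ∀ q : Q, 0 ≤ E a q)
    (q : Q) (x : A) : 0 ≤ (E (star x * x) q).re :=
  (Complex.le_def.1 (hEpos _ (star_mul_self_nonneg x) q)).1

lemma helper_iff (E : A →L[ℂ] C₀(Q, ℂ)) (hEpos : ∀ a : A, 0 ≤ a → ∀ q : Q, 0 ≤ E a q)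
    (q : Q) (a : A) (c : ℝ) (hc : 0 ≤ c) :
    pE E q a ≤ c ↔ ∀ x : A,
      (E (star x * (star a * a) * x) q).re ≤ c ^ 2 * (E (star x * x) q).re := by
  unfold pE
  rw [Real.sqrt_le_left hc]
  constructor
  · intro h x
    rcases (helper_nonneg E hEpos q x).eq_or_lt with h0 | h0
    · have := helper_bound E hEpos q (star a * a) x (.star_mul_self a)
      rw [← h0] at this ⊢
      linarith
    · rw [← div_le_iff₀ h0]
      refine le_trans (le_csSup (a := _) ?_ (Exists.intro x ⟨h0, rfl⟩)) h
      refine ⟨‖star a * a‖, ?_⟩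
      rintro _ ⟨y, hy, rfl⟩
      rw [div_le_iff₀ hy]
      exact helper_bound E hEpos q _ y (.star_mul_self a)
  · intro h
    apply Real.sSup_le _ (by positivity)
    rintro _ ⟨y, hy, rfl⟩
    rw [div_le_iff₀ hy]
    exact h y

lemma helper_pE_nonneg (E : A →L[ℂ] C₀(Q, ℂ)) (q : Q) (a : A) : 0 ≤ pE E q a :=
  Real.sqrt_nonneg _

lemma helper_pE_le_norm (E : A →L[ℂ] C₀(Q, ℂ))
    (hEpos : ∀ a : A, 0 ≤ a → ∀ q : Q, 0 ≤ E a q) (q : Q) (a : A) : pE E q a ≤ ‖a‖ := by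
  rw [helper_iff E hEpos q a _ (norm_nonneg _)]
  intro x
  have := helper_bound E hEpos q (star a * a) x (.star_mul_self a)
  rwa [CStarRing.norm_star_mul_self, ← sq] at this

lemma helper_pE_sq (E : A →L[ℂ] C₀(Q, ℂ))
    (hEpos : ∀ a : A, 0 ≤ a → ∀ q : Q, 0 ≤ E a q) (q : Q) (a b : A) :
    pE E q b ≤ √(pE E q a ^ 2 + ‖star b * b - star a * a‖) := by
  rw [helper_iff E hEpos q b _ (Real.sqrt_nonneg _)]
  intro x
  rw [Real.sq_sqrt (by positivity)]
  have h1 := (helper_iff E hEpos q a _ (helper_pE_nonneg E q a)).1 le_rfl x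
  have h2 := helper_bound E hEpos q (star b * b - star a * a) x
    ((IsSelfAdjoint.star_mul_self b).sub (.star_mul_self a))
  rw [mul_sub, sub_mul, map_sub] at h2
  have h3 : ((E (star x * (star b * b) * x) - E (star x * (star a * a) * x)) q).re =
    (E (star x * (star b * b) * x) q).re - (E (star x * (star a * a) * x) q).re := by simp
  rw [h3] at h2
  linarith

lemma helper_lsc (E : A →L[ℂ] C₀(Q, ℂ))
    (hEpos : ∀ a : A, 0 ≤ a → ∀ q : Q, 0 ≤ E a q) (q : Q) (a : A) (c : ℝ)
    (h : c < pE E q a) : ∀ᶠ q' in nhds q, c < pE E q' a := by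
  rcases lt_or_ge c 0 with hc | hc
  · exact Filter.Eventually.of_forall fun q' => hc.trans_le (helper_pE_nonneg E q' a)
  · have h1 := h.not_ge
    rw [helper_iff E hEpos q a c hc] at h1
    push Not at h1
    obtain ⟨x, hx⟩ := h1
    have hcont : ∀ b : A, Continuous fun q => (E b q).re := fun b =>
      Complex.continuous_re.comp (map_continuous (E b))
    have := ((continuous_const.mul (hcont (star x * x))).continuousAt (x := q)).eventually_lt
      ((hcont (star x * (star a * a) * x)).continuousAt) hx
    filter_upwards [this] with q' hq'
    by_contra h2
    push Not at h2
    exact absurd ((helper_iff E hEpos q' a c hc).1 h2 x) hq'.not_ge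

lemma helper_mod (ι : C₀(Q, ℂ) →⋆ₙₐ[ℂ] A)
    (hcentral : ∀ (f : C₀(Q, ℂ)) (a : A), ι f * a = a * ι f)
    (E : A →L[ℂ] C₀(Q, ℂ))
    (hEmod : ∀ (f₁ f₂ : C₀(Q, ℂ)) (a : A), E (ι f₁ * a * ι f₂) = f₁ * E a * f₂)
    (q : Q) (f : C₀(Q, ℂ)) (a x : A) :
    (E (star x * (star (ι f * a) * (ι f * a)) * x) q).re =
      ‖f q‖ ^ 2 * (E (star x * (star a * a) * x) q).re := by
  have h1 : star x * (star (ι f * a) * (ι f * a)) * x =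
      ι (star f) * (star x * (star a * a) * x) * ι f := by
    rw [star_mul, ← map_star, ← hcentral (star f) (star a), hcentral f a]
    simp only [mul_assoc]
    rw [hcentral f x, ← mul_assoc (star x) (ι (star f)), ← hcentral (star f) (star x)]
    simp only [mul_assoc]
  rw [h1, hEmod]
  have : (star f * E (star x * (star a * a) * x) * f) q =
    ((‖f q‖ ^ 2 : ℝ) : ℂ) * E (star x * (star a * a) * x) q := by
    have h := Complex.conj_mul' (f q)
    simp only [ZeroAtInftyContinuousMap.mul_apply, ZeroAtInftyContinuousMap.star_apply]
    push_cast
    rw [← h]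
    simp only [RCLike.star_def]
    ring
  rw [this, Complex.re_ofReal_mul]

lemma helper_pE_smul (ι : C₀(Q, ℂ) →⋆ₙₐ[ℂ] A)
    (hcentral : ∀ (f : C₀(Q, ℂ)) (a : A), ι f * a = a * ι f)
    (E : A →L[ℂ] C₀(Q, ℂ))
    (hEmod : ∀ (f₁ f₂ : C₀(Q, ℂ)) (a : A), E (ι f₁ * a * ι f₂) = f₁ * E a * f₂)
    (hEpos : ∀ a : A, 0 ≤ a → ∀ q : Q, 0 ≤ E a q)
    (q : Q) (f : C₀(Q, ℂ)) (a : A) :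
    pE E q (ι f * a) = ‖f q‖ * pE E q a := by
  apply le_antisymm
  · rw [helper_iff E hEpos q _ _ (mul_nonneg (norm_nonneg _) (helper_pE_nonneg E q a))]
    intro x
    rw [helper_mod ι hcentral E hEmod, mul_pow, mul_assoc (‖f q‖ ^ 2)]
    exact mul_le_mul_of_nonneg_left
      ((helper_iff E hEpos q a _ (helper_pE_nonneg E q a)).1 le_rfl x) (sq_nonneg _)
  · rcases (norm_nonneg (f q)).eq_or_lt with h0 | h0
    · rw [← h0, zero_mul]; exact helper_pE_nonneg E q _
    · rw [mul_comm, ← le_div_iff₀ h0,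
        helper_iff E hEpos q _ _ (div_nonneg (helper_pE_nonneg E q _) h0.le)]
      intro x
      have h1 := (helper_iff E hEpos q _ _ (helper_pE_nonneg E q (ι f * a))).1 le_rfl x
      rw [helper_mod ι hcentral E hEmod] at h1
      rw [div_pow, div_mul_eq_mul_div, le_div_iff₀ (pow_pos h0 2), mul_comm]
      exact h1

lemma helper_polar (E : A →L[ℂ] C₀(Q, ℂ)) (w : A)
    (h : ∀ y : A, E (star y * w * y) = 0) (y z : A) : E (y * w * z) = 0 := by
  have key : ∀ y z : A, E (star y * w * z) = 0 := by
    intro y z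
    have h1 := h (y + z)
    have h2 := h (y + Complex.I • z)
    simp only [star_add, star_smul, add_mul, mul_add, map_add, h, smul_mul_assoc, mul_smul_comm,
      map_smul, RCLike.star_def, Complex.conj_I, smul_zero] at h1 h2
    have h3 : E (star z * w * y) = - E (star y * w * z) := by
      have : E (star z * w * y) + E (star y * w * z) = 0 := by simpa using h1
      exact eq_neg_of_add_eq_zero_left this
    rw [h3] at h2
    ext q
    have h4 := DFunLike.congr_fun h2 q
    simp only [ZeroAtInftyContinuousMap.add_apply, ZeroAtInftyContinuousMap.smul_apply,
      ZeroAtInftyContinuousMap.neg_apply, ZeroAtInftyContinuousMap.zero_apply, smul_eq_mul] at h4 ⊢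
    have h5 : (2 * Complex.I) * E (star y * w * z) q = 0 := by linear_combination h4
    simpa using h5
  simpa using key (star y) z

lemma helper_point [LocallyCompactSpace Q] [T2Space Q] (q₀ : Q) (V : Set Q) (hV : V ∈ nhds q₀) :
    ∃ f : C₀(Q, ℂ), (∀ x : Q, 0 ≤ f x ∧ f x ≤ 1) ∧ f q₀ = 1 ∧ ∀ x, x ∉ V → f x = 0 := by
  obtain ⟨f, hf1, hf2, hf3, hf4⟩ := exists_continuous_one_zero_of_isCompact
    (isCompact_singleton (x := q₀)) (isOpen_interior (s := V)).isClosed_compl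
    (by simpa [Set.disjoint_compl_right_iff_subset] using mem_interior_iff_mem_nhds.2 hV)
  refine ⟨⟨⟨fun x => (f x : ℂ), by fun_prop⟩, ?_⟩, ?_, ?_, ?_⟩
  · have h := hf3.is_zero_at_infty
    have := (Complex.continuous_ofReal.tendsto 0).comp h
    simpa using! this
  · intro x
    change (0 : ℂ) ≤ (f x : ℂ) ∧ (f x : ℂ) ≤ 1
    have := hf4 x
    exact ⟨by exact_mod_cast this.1, by exact_mod_cast this.2⟩
  · change (f q₀ : ℂ) = 1
    rw [hf1 rfl]; simp
  · intro x hx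
    change (f x : ℂ) = 0
    rw [hf2 (fun h => hx (interior_subset h))]; simp

lemma helper_ideal [LocallyCompactSpace Q] [T2Space Q] (ι : C₀(Q, ℂ) →⋆ₙₐ[ℂ] A)
    (E : A →L[ℂ] C₀(Q, ℂ))
    (hEmod : ∀ (f₁ f₂ : C₀(Q, ℂ)) (a : A), E (ι f₁ * a * ι f₂) = f₁ * E a * f₂)
    (hEessfaithful : ∀ L : TwoSidedIdeal A, IsClosed (L : Set A) →
      (∀ x ∈ L, E x = 0) → (L : Set A) = {0})
    (w : A) (hw : ∀ y z : A, E (y * w * z) = 0) : w = 0 := by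
  let S : Set A := {x | ∀ y z : A, E (y * x * z) = 0}
  let L : TwoSidedIdeal A := TwoSidedIdeal.mk' S
    (by intro y z; simp)
    (by intro a b ha hb y z; rw [mul_add, add_mul, map_add, ha, hb, add_zero])
    (by intro a ha y z; rw [mul_neg, neg_mul, map_neg, ha, neg_zero])
    (by intro a b hb y z; rw [← mul_assoc]; exact hb _ _)
    (by intro a b ha y z; rw [← mul_assoc, mul_assoc]; exact ha _ _)
  have hL : (L : Set A) = S := TwoSidedIdeal.coe_mk' _ _ _ _ _ _
  have hclosed : IsClosed S := by
    have : S = ⋂ y : A, ⋂ z : A, {x | E (y * x * z) = 0} := by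
      ext x; simp [S]
    rw [this]
    refine isClosed_iInter fun y => isClosed_iInter fun z => ?_
    exact isClosed_eq (by fun_prop) continuous_const
  have h := hEessfaithful L (by rw [hL]; exact hclosed) (by
    intro x hx
    have hx : x ∈ S := by rw [← hL]; exact hx
    ext q
    obtain ⟨f, -, hf, -⟩ := helper_point q Set.univ Filter.univ_mem
    have h1 := hx (ι f) (ι f)
    rw [hEmod] at h1
    have h2 := DFunLike.congr_fun h1 q
    simpa [hf] using h2)
  rw [hL] at h
  have : w ∈ S := hw
  rw [h] at this
  exact this

lemma helper_norm_le [LocallyCompactSpace Q] [T2Space Q] (ι : C₀(Q, ℂ) →⋆ₙₐ[ℂ] A)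
    (E : A →L[ℂ] C₀(Q, ℂ))
    (hEmod : ∀ (f₁ f₂ : C₀(Q, ℂ)) (a : A), E (ι f₁ * a * ι f₂) = f₁ * E a * f₂)
    (hEpos : ∀ a : A, 0 ≤ a → ∀ q : Q, 0 ≤ E a q)
    (hEessfaithful : ∀ L : TwoSidedIdeal A, IsClosed (L : Set A) →
      (∀ x ∈ L, E x = 0) → (L : Set A) = {0})
    (a : A) (c : ℝ) (hc : 0 ≤ c) (h : ∀ q, pE E q a ≤ c) : ‖a‖ ≤ c := by
  set b : A := star a * a with hb
  have hb0 : 0 ≤ b := star_mul_self_nonneg a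
  have hbs : IsSelfAdjoint b := .star_mul_self a
  set d : ℝ := c ^ 2 with hd
  have hd0 : 0 ≤ d := by positivity
  let m : ℝ → ℝ := fun t => max (t - d) 0
  have hm : Continuous m := by fun_prop
  let k : ℝ → ℝ := fun t => √(m t)
  have hk : Continuous k := by fun_prop
  have hm0 : m 0 = 0 := by simp [m, hd0]
  have hk0 : k 0 = 0 := by simp [k, hm0]
  set K : A := cfcₙ k b with hK
  set w : A := cfcₙ (fun t => m t ^ 2) b with hw
  have hKs : star K = K := (IsSelfAdjoint.cfcₙ (f := k) (a := b)).star_eq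
  have hKw : K * b * K - d • (K * K) = w := by
    have e1 : K * b * K = cfcₙ (fun t => k t * t * k t) b := by
      conv_lhs => rw [hK]; enter [1, 2]; rw [← cfcₙ_id' ℝ b]
      rw [← cfcₙ_mul (fun t => k t) (fun t => t) b (by fun_prop) hk0 (by fun_prop) rfl,
        ← cfcₙ_mul (fun t => k t * t) (fun t => k t) b (by fun_prop) (by simp) (by fun_prop) hk0]
    have e2 : d • (K * K) = cfcₙ (fun t => d • (k t * k t)) b := by
      rw [hK, ← cfcₙ_mul (fun t => k t) (fun t => k t) b (by fun_prop) hk0 (by fun_prop) hk0,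
        ← cfcₙ_smul d (fun t => k t * k t) b (by fun_prop) (by simp [hk0])]
    rw [e1, e2, ← cfcₙ_sub _ _ b (by fun_prop) (by simp) (by fun_prop) (by simp [hk0]), hw]
    congr 1
    ext t
    have : k t * k t = m t := Real.mul_self_sqrt (le_max_right _ _)
    have h2 : m t * (t - d) = m t ^ 2 := by
      simp only [m]
      rcases max_cases (t - d) 0 with ⟨h1, _⟩ | ⟨h1, _⟩ <;> rw [h1] <;> ring
    rw [smul_eq_mul, this, ← h2, ← this]; ring
  have hw0 : 0 ≤ w := cfcₙ_nonneg (fun t _ => by positivity)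
  have hwE : ∀ y : A, E (star y * w * y) = 0 := by
    intro y
    ext q
    have h1 := (helper_iff E hEpos q a c hc).1 (h q) (K * y)
    have h2 := hEpos _ (star_left_conjugate_nonneg hw0 y) q
    have h3 : star y * w * y = star (K * y) * (star a * a) * (K * y)
        - (d : ℂ) • (star (K * y) * (K * y)) := by
      rw [← hKw, star_mul, hKs, Complex.coe_smul]
      simp only [mul_sub, sub_mul, mul_assoc, mul_smul_comm, smul_mul_assoc, hb]
    have h4 : (E (star y * w * y) q).re ≤ 0 := by
      rw [h3, map_sub, map_smul]
      simp only [ZeroAtInftyContinuousMap.sub_apply, ZeroAtInftyContinuousMap.smul_apply,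
        Complex.sub_re, smul_eq_mul, Complex.re_ofReal_mul]
      linarith
    obtain ⟨h5, h6⟩ := Complex.le_def.1 h2
    apply Complex.ext
    · exact le_antisymm h4 h5
    · exact h6.symm
  have hwz : w = 0 := helper_ideal ι E hEmod hEessfaithful w (helper_polar E w hwE)
  have hbn : ‖b‖ ≤ d := by
    by_contra! hlt
    obtain ⟨t, ht, htn⟩ := (NonUnitalIsometricContinuousFunctionalCalculus.isGreatest_norm_quasispectrum
      (𝕜 := ℝ) b hbs).1
    have ht0 : 0 ≤ t := quasispectrum_nonneg_of_nonneg b hb0 t ht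
    have h1 := norm_apply_le_norm_cfcₙ (fun t => m t ^ 2) b ht (by fun_prop) (by simp [hm0]) hbs
    rw [← hw, hwz, norm_zero] at h1
    have h2 : m t = 0 := by simpa using h1
    simp only [Real.norm_eq_abs, abs_of_nonneg ht0] at htn
    have : t - d ≤ m t := le_max_left _ _
    linarith
  rw [hb, CStarRing.norm_star_mul_self, ← sq] at hbn
  exact (pow_le_pow_iff_left₀ (norm_nonneg _) hc two_ne_zero).1 hbn

lemma helper_norm_f [LocallyCompactSpace Q] (f : C₀(Q, ℂ)) (hf : ∀ x : Q, 0 ≤ f x ∧ f x ≤ 1)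
    (x : Q) : ‖f x‖ ≤ 1 := by
  have h := Complex.norm_of_nonneg' (hf x).1
  have h2 := (hf x).2
  rw [← h] at h2
  exact_mod_cast h2

lemma helper_punif_nonempty [LocallyCompactSpace Q] [T2Space Q] (ι : C₀(Q, ℂ) →⋆ₙₐ[ℂ] A)
    (q : Q) (a : A) :
    {r : ℝ | ∃ f : C₀(Q, ℂ), (∀ x : Q, 0 ≤ f x ∧ f x ≤ 1) ∧ f q = 1 ∧
      r = ‖ι f * a‖}.Nonempty := by
  obtain ⟨f, h1, h2, -⟩ := helper_point q Set.univ Filter.univ_mem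
  exact ⟨_, f, h1, h2, rfl⟩

lemma helper_punif_le [LocallyCompactSpace Q] [T2Space Q] (ι : C₀(Q, ℂ) →⋆ₙₐ[ℂ] A)
    (q : Q) (a : A) (f : C₀(Q, ℂ)) (hf : ∀ x : Q, 0 ≤ f x ∧ f x ≤ 1) (hfq : f q = 1) :
    punif ι q a ≤ ‖ι f * a‖ := by
  refine csInf_le ⟨0, ?_⟩ ⟨f, hf, hfq, rfl⟩
  rintro _ ⟨g, -, -, rfl⟩
  exact norm_nonneg _

lemma helper_punif_lip [LocallyCompactSpace Q] [T2Space Q] (ι : C₀(Q, ℂ) →⋆ₙₐ[ℂ] A)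
    (hisom : Isometry ι) (q : Q) (a b : A) :
    punif ι q a ≤ punif ι q b + ‖a - b‖ := by
  rw [← sub_le_iff_le_add]
  refine le_csInf (helper_punif_nonempty ι q b) ?_
  rintro _ ⟨f, hf, hfq, rfl⟩
  have h1 := helper_punif_le ι q a f hf hfq
  have hfn : ‖ι f‖ ≤ 1 := by
    rw [hisom.norm_map_of_map_zero (map_zero ι)]
    rw [← ZeroAtInftyContinuousMap.norm_toBCF_eq_norm]
    exact (BoundedContinuousFunction.norm_le zero_le_one).2 fun x => helper_norm_f f hf x
  have h2 : ‖ι f * a‖ ≤ ‖ι f * b‖ + ‖a - b‖ := by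
    calc ‖ι f * a‖ = ‖ι f * b + ι f * (a - b)‖ := by rw [← mul_add]; simp
      _ ≤ ‖ι f * b‖ + ‖ι f‖ * ‖a - b‖ := (norm_add_le _ _).trans (by gcongr; exact norm_mul_le _ _)
      _ ≤ ‖ι f * b‖ + 1 * ‖a - b‖ := by gcongr
      _ = _ := by rw [one_mul]
  linarith

lemma helper_punif_continuous [LocallyCompactSpace Q] [T2Space Q] (ι : C₀(Q, ℂ) →⋆ₙₐ[ℂ] A)
    (hisom : Isometry ι) (q : Q) : Continuous (punif ι q) := by
  refine (LipschitzWith.of_dist_le_mul (K := 1) fun a b => ?_).continuous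
  have h1 := helper_punif_lip ι hisom q a b
  have h2 := helper_punif_lip ι hisom q b a
  rw [norm_sub_rev] at h2
  rw [Real.dist_eq, dist_eq_norm, NNReal.coe_one, one_mul, abs_le]
  constructor <;> linarith

lemma helper_pE_continuous (E : A →L[ℂ] C₀(Q, ℂ))
    (hEpos : ∀ a : A, 0 ≤ a → ∀ q : Q, 0 ≤ E a q) (q : Q) : Continuous (pE E q) := by
  have hsq : Continuous fun a => pE E q a ^ 2 := by
    rw [continuous_iff_continuousAt]
    intro a
    have h0 : Filter.Tendsto (fun b : A => ‖star b * b - star a * a‖) (nhds a) (nhds 0) := by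
      have : Continuous fun b : A => ‖star b * b - star a * a‖ := by fun_prop
      simpa using this.tendsto a
    refine tendsto_iff_dist_tendsto_zero.2 (squeeze_zero (fun _ => dist_nonneg) (fun b => ?_) h0)
    have h1 := helper_pE_sq E hEpos q a b
    have h2 := helper_pE_sq E hEpos q b a
    rw [Real.le_sqrt (helper_pE_nonneg E q _) (by positivity)] at h1 h2
    rw [norm_sub_rev] at h2
    rw [Real.dist_eq, abs_le]
    constructor <;> linarith
  have : pE E q = fun a => √(pE E q a ^ 2) := by
    ext a; rw [Real.sqrt_sq (helper_pE_nonneg E q a)]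
  rw [this]
  exact hsq.sqrt

end Helpers

/-- For a central non-degenerate inclusion `C₀(Q) ⊆ A`, an essentially
faithful conditional expectation `E : A → C₀(Q)` and `q₀ ∈ Q`, the following are equivalent:
(i) `q ↦ p^E_q(a)` is continuous at `q₀` for all `a`;
(i') the same for all `a` in some dense subset;
(i'') `limsup_{q→q₀} p^E_q(a) ≤ p^E_{q₀}(a)` for all `a` in some dense subset;
(ii) `p^unif_{q₀} = p^E_{q₀}` on `A`;
(ii') `p^unif_{q₀} = p^E_{q₀}` on some dense subset. -/
theorem stmt12 {Q : Type*} [TopologicalSpace Q] [LocallyCompactSpace Q] [T2Space Q]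
    {A : Type*} [NonUnitalCStarAlgebra A] [PartialOrder A] [StarOrderedRing A]
    (ι : C₀(Q, ℂ) →⋆ₙₐ[ℂ] A) (hisom : Isometry ι)
    (hcentral : ∀ (f : C₀(Q, ℂ)) (a : A), ι f * a = a * ι f)
    (hnondeg : closure
      (Submodule.span ℂ {x : A | ∃ (f : C₀(Q, ℂ)) (a : A), x = ι f * a} : Set A) = Set.univ)
    (E : A →L[ℂ] C₀(Q, ℂ))
    (hEnorm : ‖E‖ = 1)
    (hEproj : ∀ f : C₀(Q, ℂ), E (ι f) = f)
    (hEmod : ∀ (f₁ f₂ : C₀(Q, ℂ)) (a : A), E (ι f₁ * a * ι f₂) = f₁ * E a * f₂)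
    (hEpos : ∀ a : A, 0 ≤ a → ∀ q : Q, 0 ≤ E a q)
    (hEessfaithful : ∀ L : TwoSidedIdeal A, IsClosed (L : Set A) →
      (∀ x ∈ L, E x = 0) → (L : Set A) = {0})
    (q₀ : Q) :
    ((∀ a : A, ContinuousAt (fun q : Q => pE E q a) q₀) ↔
      (∃ A₀ : Set A, Dense A₀ ∧ ∀ a ∈ A₀, ContinuousAt (fun q : Q => pE E q a) q₀)) ∧
    ((∀ a : A, ContinuousAt (fun q : Q => pE E q a) q₀) ↔
      (∃ A₀ : Set A, Dense A₀ ∧ ∀ a ∈ A₀, ∀ ε : ℝ, 0 < ε →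
        ∃ V ∈ nhds q₀, ∀ q ∈ V, pE E q a ≤ pE E q₀ a + ε)) ∧
    ((∀ a : A, ContinuousAt (fun q : Q => pE E q a) q₀) ↔
      (∀ a : A, punif ι q₀ a = pE E q₀ a)) ∧
    ((∀ a : A, ContinuousAt (fun q : Q => pE E q a) q₀) ↔
      (∃ A₀ : Set A, Dense A₀ ∧ ∀ a ∈ A₀, punif ι q₀ a = pE E q₀ a)) := by
  have hpt : ∀ a : A, (∀ ε : ℝ, 0 < ε →
      ∃ V ∈ nhds q₀, ∀ q ∈ V, pE E q a ≤ pE E q₀ a + ε) → punif ι q₀ a = pE E q₀ a := by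
    intro a h
    apply le_antisymm
    · refine le_of_forall_pos_le_add fun ε hε => ?_
      obtain ⟨V, hV, hVq⟩ := h ε hε
      obtain ⟨f, hf, hfq, hf0⟩ := helper_point q₀ V hV
      refine (helper_punif_le ι q₀ a f hf hfq).trans ?_
      have hn := helper_pE_nonneg E q₀ a
      refine helper_norm_le ι E hEmod hEpos hEessfaithful _ _ (by linarith) fun q => ?_
      rw [helper_pE_smul ι hcentral E hEmod hEpos]
      by_cases hq : q ∈ V
      · refine (mul_le_of_le_one_left (helper_pE_nonneg E q a) (helper_norm_f f hf q)).trans ?_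
        exact hVq q hq
      · rw [hf0 q hq, norm_zero, zero_mul]; linarith
    · refine le_csInf (helper_punif_nonempty ι q₀ a) ?_
      rintro _ ⟨f, hf, hfq, rfl⟩
      have h1 := helper_pE_le_norm E hEpos q₀ (ι f * a)
      rw [helper_pE_smul ι hcentral E hEmod hEpos, hfq, norm_one, one_mul] at h1
      exact h1
  have hcont : ∀ a : A, punif ι q₀ a = pE E q₀ a →
      ContinuousAt (fun q : Q => pE E q a) q₀ := by
    intro a h
    refine tendsto_order.2 ⟨fun c hc => helper_lsc E hEpos q₀ a c hc, fun c hc => ?_⟩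
    obtain ⟨r, ⟨f, hf, hfq, rfl⟩, hr⟩ := exists_lt_of_csInf_lt (helper_punif_nonempty ι q₀ a)
      (show punif ι q₀ a < c by rw [h]; exact hc)
    have hfc : Continuous fun q => ‖f q‖ * c := (map_continuous f).norm.mul continuous_const
    have hev : ∀ᶠ q in nhds q₀, ‖ι f * a‖ < ‖f q‖ * c :=
      continuousAt_const.eventually_lt hfc.continuousAt (by simpa [hfq] using hr)
    filter_upwards [hev] with q hq
    have h1 := helper_pE_le_norm E hEpos q (ι f * a)
    rw [helper_pE_smul ι hcentral E hEmod hEpos] at h1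
    exact lt_of_mul_lt_mul_left (h1.trans_lt hq) (norm_nonneg _)
  have husc : ∀ a : A, ContinuousAt (fun q : Q => pE E q a) q₀ → ∀ ε : ℝ, 0 < ε →
      ∃ V ∈ nhds q₀, ∀ q ∈ V, pE E q a ≤ pE E q₀ a + ε := by
    intro a h ε hε
    have h1 := (tendsto_order.1 h).2 (pE E q₀ a + ε) (by linarith)
    exact ⟨_, h1, fun q hq => le_of_lt hq⟩
  have hdense : (∃ A₀ : Set A, Dense A₀ ∧ ∀ a ∈ A₀, punif ι q₀ a = pE E q₀ a) →
      ∀ a : A, punif ι q₀ a = pE E q₀ a := by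
    rintro ⟨A₀, hA, h⟩ a
    have := Continuous.ext_on hA (helper_punif_continuous ι hisom q₀)
      (helper_pE_continuous E hEpos q₀) h
    exact congrFun this a
  refine ⟨⟨fun h => ⟨Set.univ, dense_univ, fun a _ => h a⟩, ?_⟩,
    ⟨fun h => ⟨Set.univ, dense_univ, fun a _ => husc a (h a)⟩, ?_⟩,
    ⟨fun h a => hpt a (husc a (h a)), fun h a => hcont a (h a)⟩,
    ⟨fun h => ⟨Set.univ, dense_univ, fun a _ => hpt a (husc a (h a))⟩,
      fun h a => hcont a (hdense h a)⟩⟩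
  · rintro ⟨A₀, hA, h⟩ a
    exact hcont a (hdense ⟨A₀, hA, fun b hb => hpt b (husc b (h b hb))⟩ a)
  · rintro ⟨A₀, hA, h⟩ a
    exact hcont a (hdense ⟨A₀, hA, fun b hb => hpt b (h b hb)⟩ a)
end
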